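/- arXiv:cs/0211036 — 12 statements merged into one kernel-verified Lean document; each statement's English description precedes it below -/
import Mathlib

section
/- Domination of the satisfiability probability by the skewed expectation of PPSs of typical totally unbalanced formulae: fix a positive rational c, set λ = 3c, and let n range over positive integers with c·n ∈ ℕ. Let x_max be an even positive integer and ε > 0 a real. Set ρ = Σ_{p : 2p > x_max} κ_{2p,p}, Δ = (x_max/2 + 1)/2, and s = Σ_{(x,p) : x > 2p ≥ 0} κ̃_{x,p} (convergent series). Define the random variable X on uniformly random formulae F : Fin (c·n) → (Fin n × Bool)³ by: X(F) = 2^{s·n} times the number of PPSs of F, if for every 0 ≤ p ≤ x ≤ x_max the number of variables having x occurrences, p of them positive, in F lies between (κ̃_{x,p} − ε)·n and (κ̃_{x,p} + ε)·n; and X(F) = 0 otherwise. If for some such x_max and ε the quantity 2^{(ρ + ε·Δ)·n} · E[X] tends to 0 as n → ∞, then the probability that a uniformly random formula F : Fin (c·n) → (Fin n × Bool)³ is satisfiable tends to 0 as n → ∞. -/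
open Filter
open scoped Classical

/-- `κ_{x,p} = 2^{-x} (x choose p) e^{-λ} λ^x / x!`. -/
noncomputable def kappa (lam : ℝ) (x p : ℕ) : ℝ :=
  (2 : ℝ) ^ (-(x : ℝ)) * (Nat.choose x p : ℝ) *
    (Real.exp (-lam) * lam ^ x / (Nat.factorial x : ℝ))

/-- The totally unbalanced profile `κ̃_{x,p}`: `2κ_{x,p}` if `x > 2p`, `κ_{x,p}` if
`x = 2p`, `0` if `x < 2p`. -/
noncomputable def kappaT (lam : ℝ) (x p : ℕ) : ℝ :=
  if x < 2 * p then 0 else if 2 * p < x then 2 * kappa lam x p else kappa lam x p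

/-- Number of occurrences of the variable `v` in the formula `F`. -/
noncomputable def numOccs {n m : ℕ} (F : Fin m → Fin 3 → Fin n × Bool) (v : Fin n) : ℕ :=
  Nat.card {ij : Fin m × Fin 3 // (F ij.1 ij.2).1 = v}

/-- Number of positive occurrences of the variable `v` in the formula `F`. -/
noncomputable def numPosOccs {n m : ℕ} (F : Fin m → Fin 3 → Fin n × Bool) (v : Fin n) : ℕ :=
  Nat.card {ij : Fin m × Fin 3 // F ij.1 ij.2 = (v, true)}

/-- The assignment `A` satisfies the formula `F`. -/
def Satisfies {n m : ℕ} (F : Fin m → Fin 3 → Fin n × Bool) (A : Fin n → Bool) : Prop :=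
  ∀ i : Fin m, ∃ j : Fin 3, A (F i j).1 = (F i j).2

/-- `A` is a Positively Prime Solution (PPS) of `F`: a solution such that flipping any
single variable from `true` to `false` destroys the solution. -/
def IsPPS {n m : ℕ} (F : Fin m → Fin 3 → Fin n × Bool) (A : Fin n → Bool) : Prop :=
  Satisfies F A ∧ ∀ v : Fin n, A v = true → ¬ Satisfies F (Function.update A v false)

/-- `F` obeys the distribution `κ̃` to the accuracy `(ε, xmax)`. -/
def ObeysKT {n m : ℕ} (lam ε : ℝ) (xmax : ℕ) (F : Fin m → Fin 3 → Fin n × Bool) : Prop :=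
  ∀ x p : ℕ, p ≤ x → x ≤ xmax →
    (kappaT lam x p - ε) * (n : ℝ) ≤
        (Nat.card {v : Fin n // numOccs F v = x ∧ numPosOccs F v = p} : ℝ) ∧
      (Nat.card {v : Fin n // numOccs F v = x ∧ numPosOccs F v = p} : ℝ) ≤
        (kappaT lam x p + ε) * (n : ℝ)


lemma es_aux {β : Type} [Fintype β] [Nonempty β] (d : ℝ) (hd : 0 ≤ d) :
    ∀ (N : ℕ) (f : (Fin N → β) → ℝ),
      (∀ g i b, |f (Function.update g i b) - f g| ≤ d) →
      ∑ g, (f g - (∑ g', f g') / (Fintype.card β : ℝ) ^ N) ^ 2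
        ≤ N * d ^ 2 * (Fintype.card β : ℝ) ^ N := by
  intro N
  induction N with
  | zero =>
    intro f _
    simp
  | succ N ih =>
    intro f hf
    set K : ℝ := (Fintype.card β : ℝ) with hK
    have hKpos : 0 < K := by
      rw [hK]; exact_mod_cast Fintype.card_pos
    have split : ∀ φ : (Fin (N+1) → β) → ℝ,
        ∑ g, φ g = ∑ t : Fin N → β, ∑ b : β, φ (Fin.cons b t : Fin (N+1) → β) := by
      intro φ
      rw [← (Fin.consEquiv (fun _ : Fin (N+1) => β)).sum_comp, Fintype.sum_prod_type,
        Finset.sum_comm]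
      rfl
    set h : (Fin N → β) → ℝ := fun t => (∑ b, f (Fin.cons b t : Fin (N+1) → β)) / K with hh
    have hsum : ∀ t, ∑ b, f (Fin.cons b t : Fin (N+1) → β) = K * h t := by
      intro t; rw [hh]; field_simp
    have hbd : ∀ g i b, |h (Function.update g i b) - h g| ≤ d := by
      intro g i b
      have : h (Function.update g i b) - h g =
          (∑ b', (f (Fin.cons b' (Function.update g i b) : Fin (N+1) → β)
            - f (Fin.cons b' g : Fin (N+1) → β))) / K := by
        rw [hh, Finset.sum_sub_distrib, sub_div]
      rw [this, abs_div, abs_of_pos hKpos, div_le_iff₀ hKpos]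
      refine (Finset.abs_sum_le_sum_abs _ _).trans ?_
      calc _ ≤ ∑ b' : β, d := by
            refine Finset.sum_le_sum fun b' _ => ?_
            rw [Fin.cons_update]; exact hf _ _ _
        _ = d * K := by simp [hK, mul_comm]
    have hdev : ∀ t b, |f (Fin.cons b t : Fin (N+1) → β) - h t| ≤ d := by
      intro t b
      have : f (Fin.cons b t : Fin (N+1) → β) - h t =
          (∑ b', (f (Fin.cons b t : Fin (N+1) → β)
            - f (Fin.cons b' t : Fin (N+1) → β))) / K := by
        rw [Finset.sum_sub_distrib, sub_div, Finset.sum_const, Finset.card_univ, nsmul_eq_mul,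
          ← hK, mul_div_cancel_left₀ _ hKpos.ne']
      rw [this, abs_div, abs_of_pos hKpos, div_le_iff₀ hKpos]
      refine (Finset.abs_sum_le_sum_abs _ _).trans ?_
      calc _ ≤ ∑ b' : β, d := by
            refine Finset.sum_le_sum fun b' _ => ?_
            have := hf (Fin.cons b' t : Fin (N+1) → β) 0 b
            rwa [Fin.update_cons_zero] at this
        _ = d * K := by simp [hK, mul_comm]
    have hμ : (∑ g, f g) / K ^ (N+1) = (∑ t, h t) / K ^ N := by
      rw [split f]
      simp_rw [hsum]
      rw [← Finset.mul_sum]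
      field_simp
      ring
    rw [hμ, split]
    set μ := (∑ t, h t) / K ^ N with hμd
    have hin : ∀ t, ∑ b, (f (Fin.cons b t : Fin (N+1) → β) - μ) ^ 2
        ≤ K * d ^ 2 + K * (h t - μ) ^ 2 := by
      intro t
      have e1 : ∀ b, (f (Fin.cons b t : Fin (N+1) → β) - μ) ^ 2 =
          (f (Fin.cons b t : Fin (N+1) → β) - h t) ^ 2
          + (2 * (h t - μ) * f (Fin.cons b t : Fin (N+1) → β)
            - 2 * (h t - μ) * h t + (h t - μ) ^ 2) := by
        intro b; ring
      simp_rw [e1]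
      rw [Finset.sum_add_distrib, Finset.sum_add_distrib, Finset.sum_sub_distrib,
        ← Finset.mul_sum, hsum t]
      have e2 : ∑ b, (f (Fin.cons b t : Fin (N+1) → β) - h t) ^ 2 ≤ ∑ b : β, d ^ 2 := by
        refine Finset.sum_le_sum fun b _ => ?_
        exact sq_le_sq' (by linarith [(abs_le.1 (hdev t b)).1]) (abs_le.1 (hdev t b)).2
      simp only [Finset.sum_const, Finset.card_univ, nsmul_eq_mul, ← hK] at e2 ⊢
      nlinarith [e2]
    calc _ ≤ ∑ t, (K * d ^ 2 + K * (h t - μ) ^ 2) := Finset.sum_le_sum fun t _ => hin t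
      _ = K ^ N * (K * d^2) + K * ∑ t, (h t - μ) ^ 2 := by
        rw [Finset.sum_add_distrib, Finset.mul_sum]; simp [hK]
      _ ≤ K ^ N * (K * d^2) + K * (N * d ^ 2 * K ^ N) := by
        gcongr
        exact ih h hbd
      _ = _ := by push_cast; ring

/-- Efron–Stein style variance bound over an arbitrary finite index type. -/
lemma es {ι β : Type} [Fintype ι] [Fintype β] [Nonempty β] (d : ℝ) (hd : 0 ≤ d)
    (f : (ι → β) → ℝ)
      (hf : ∀ g i b, |f (Function.update g i b) - f g| ≤ d) :
      ∑ g, (f g - (∑ g', f g') / (Fintype.card β : ℝ) ^ (Fintype.card ι)) ^ 2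
        ≤ Fintype.card ι * d ^ 2 * (Fintype.card β : ℝ) ^ (Fintype.card ι) := by
  let e : ι ≃ Fin (Fintype.card ι) := Fintype.equivFin ι
  let E : (ι → β) ≃ (Fin (Fintype.card ι) → β) := e.arrowCongr (Equiv.refl β)
  have := es_aux (β := β) d hd (Fintype.card ι) (fun g => f (E.symm g)) (by
    intro g i b
    have : E.symm (Function.update g i b) = Function.update (E.symm g) (e.symm i) b := by
      ext j
      simp [E, Function.update_apply, Equiv.eq_symm_apply]
    simp only [this]
    exact hf _ _ _)
  rw [E.symm.sum_comp f] at this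
  rw [← E.symm.sum_comp]
  exact this

/-- number of variables with `x` occurrences, `p` of them positive -/
noncomputable def cntG {ι : Type} [Fintype ι] {n : ℕ} (x p : ℕ) (g : ι → Fin n × Bool) : ℕ :=
  (Finset.univ.filter fun v : Fin n =>
    (Finset.univ.filter fun i => (g i).1 = v).card = x ∧
    (Finset.univ.filter fun i => g i = (v, true)).card = p).card

lemma cntG_update_le {ι : Type} [Fintype ι] {n : ℕ} (x p : ℕ) (g g' : ι → Fin n × Bool)
    (i : ι) (h : ∀ j, j ≠ i → g' j = g j) : cntG x p g' ≤ cntG x p g + 2 := by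
  unfold cntG
  refine le_trans (Finset.card_le_card (t := (Finset.univ.filter fun v : Fin n =>
    (Finset.univ.filter fun i => (g i).1 = v).card = x ∧
    (Finset.univ.filter fun i => g i = (v, true)).card = p) ∪ {(g i).1, (g' i).1}) ?_) ?_
  · intro v hv
    simp only [Finset.mem_filter, Finset.mem_univ, true_and, Finset.mem_union,
      Finset.mem_insert, Finset.mem_singleton] at hv ⊢
    by_cases h1 : v = (g i).1
    · exact Or.inr (Or.inl h1)
    by_cases h2 : v = (g' i).1
    · exact Or.inr (Or.inr h2)
    left
    have e1 : (Finset.univ.filter fun i => (g i).1 = v)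
        = (Finset.univ.filter fun i => (g' i).1 = v) := by
      ext j
      simp only [Finset.mem_filter, Finset.mem_univ, true_and]
      by_cases hj : j = i
      · subst hj
        exact ⟨fun e => absurd e.symm h1, fun e => absurd e.symm h2⟩
      · rw [h j hj]
    have e2 : (Finset.univ.filter fun i => g i = (v, true))
        = (Finset.univ.filter fun i => g' i = (v, true)) := by
      ext j
      simp only [Finset.mem_filter, Finset.mem_univ, true_and]
      by_cases hj : j = i
      · subst hj
        constructor
        · intro e; exact absurd (by rw [e]) h1
        · intro e; exact absurd (by rw [e]) h2
      · rw [h j hj]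
    rw [e1, e2]; exact hv
  · refine (Finset.card_union_le _ _).trans ?_
    gcongr
    exact Finset.card_le_two

lemma cntG_update {ι : Type} [Fintype ι] {n : ℕ} (x p : ℕ) (g : ι → Fin n × Bool)
    (i : ι) (b : Fin n × Bool) :
    |(cntG x p (Function.update g i b) : ℝ) - cntG x p g| ≤ 2 := by
  have h1 := cntG_update_le x p g (Function.update g i b) i
    (fun j hj => Function.update_of_ne hj _ _)
  have h2 := cntG_update_le x p (Function.update g i b) g i
    (fun j hj => (Function.update_of_ne hj _ _).symm)
  rw [abs_le]
  have h1' : (cntG x p (Function.update g i b) : ℝ) ≤ cntG x p g + 2 := by exact_mod_cast h1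
  have h2' : (cntG x p g : ℝ) ≤ cntG x p (Function.update g i b) + 2 := by exact_mod_cast h2
  constructor <;> linarith

lemma card_occ {ι : Type} [Fintype ι] {n : ℕ} (v : Fin n) (x p : ℕ) (hp : p ≤ x) :
    (Finset.univ.filter fun g : ι → Fin n × Bool =>
      (Finset.univ.filter fun i => (g i).1 = v).card = x ∧
      (Finset.univ.filter fun i => g i = (v, true)).card = p).card
    = (Fintype.card ι).choose x * x.choose p * (2 * n - 2) ^ (Fintype.card ι - x) := by
  have hN : (Finset.univ : Finset ι).card = Fintype.card ι := Finset.card_univ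
  set t : Finset (Σ _ : Finset ι, Finset ι) :=
    ((Finset.univ : Finset ι).powersetCard p).sigma (fun S => Sᶜ.powersetCard (x - p)) with ht
  have hsplit : ∀ g : ι → Fin n × Bool,
      (Finset.univ.filter fun i => (g i).1 = v).card =
      (Finset.univ.filter fun i => g i = (v, true)).card +
      (Finset.univ.filter fun i => g i = (v, false)).card := by
    intro g
    rw [← Finset.card_union_of_disjoint]
    · congr 1
      ext i
      simp only [Finset.mem_filter, Finset.mem_univ, true_and, Finset.mem_union]
      rcases h : g i with ⟨w, b⟩
      cases b <;> simp
    · rw [Finset.disjoint_filter]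
      intro i _ h1 h2
      rw [h1] at h2
      simp at h2
  rw [Finset.card_eq_sum_card_fiberwise (t := t)
    (f := fun g => (⟨Finset.univ.filter fun i => g i = (v, true),
      Finset.univ.filter fun i => g i = (v, false)⟩ : Σ _ : Finset ι, Finset ι))]
  · have hfib : ∀ q ∈ t, (Finset.filter (fun g : ι → Fin n × Bool =>
        (⟨Finset.univ.filter fun i => g i = (v, true),
      Finset.univ.filter fun i => g i = (v, false)⟩ : Σ _ : Finset ι, Finset ι) = q)
        (Finset.univ.filter fun g : ι → Fin n × Bool =>
      (Finset.univ.filter fun i => (g i).1 = v).card = x ∧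
      (Finset.univ.filter fun i => g i = (v, true)).card = p)).card
        = (2 * n - 2) ^ (Fintype.card ι - x) := by
      rintro ⟨S, T⟩ hq
      simp only [ht, Finset.mem_sigma, Finset.mem_powersetCard] at hq
      obtain ⟨⟨-, hS⟩, hTS, hT⟩ := hq
      have hdis : Disjoint S T := by
        rw [Finset.disjoint_left]
        intro i hi hi'
        exact Finset.mem_compl.1 (hTS hi') hi
      set A : ι → Finset (Fin n × Bool) := fun i =>
        if i ∈ S then {(v, true)} else if i ∈ T then {(v, false)} else
          ({v}ᶜ : Finset (Fin n)) ×ˢ Finset.univ with hA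
      have : (Finset.filter (fun g : ι → Fin n × Bool =>
        (⟨Finset.univ.filter fun i => g i = (v, true),
      Finset.univ.filter fun i => g i = (v, false)⟩ : Σ _ : Finset ι, Finset ι) = ⟨S, T⟩)
        (Finset.univ.filter fun g : ι → Fin n × Bool =>
      (Finset.univ.filter fun i => (g i).1 = v).card = x ∧
      (Finset.univ.filter fun i => g i = (v, true)).card = p)) = Fintype.piFinset A := by
        ext g
        simp only [Finset.mem_filter, Finset.mem_univ, true_and, Fintype.mem_piFinset,
          Sigma.mk.injEq, heq_eq_eq]
        constructor
        · rintro ⟨-, rfl, rfl⟩ i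
          simp only [hA, Finset.mem_filter, Finset.mem_univ, true_and]
          rcases h : g i with ⟨w, b⟩
          by_cases hw : w = v <;> cases b <;> simp [hw]
        · intro h
          have hSS : (Finset.univ.filter fun i => g i = (v, true)) = S := by
            ext i
            have := h i
            simp only [hA] at this
            by_cases h1 : i ∈ S
            · simp_all
            · by_cases h2 : i ∈ T
              · simp_all
              · simp only [h1, h2, if_false, Finset.mem_product, Finset.mem_compl,
                  Finset.mem_singleton, Finset.mem_univ, and_true] at this
                simp only [Finset.mem_filter, Finset.mem_univ, true_and, h1, iff_false]
                intro e; exact this (by rw [e])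
          have hTT : (Finset.univ.filter fun i => g i = (v, false)) = T := by
            ext i
            have := h i
            simp only [hA] at this
            by_cases h1 : i ∈ S
            · have h2 : i ∉ T := Finset.disjoint_left.1 hdis h1
              simp_all
            · by_cases h2 : i ∈ T
              · simp_all
              · simp only [h1, h2, if_false, Finset.mem_product, Finset.mem_compl,
                  Finset.mem_singleton, Finset.mem_univ, and_true] at this
                simp only [Finset.mem_filter, Finset.mem_univ, true_and, h2, iff_false]
                intro e; exact this (by rw [e])
          refine ⟨⟨?_, ?_⟩, hSS, hTT⟩
          · rw [hsplit, hSS, hTT, hS, hT]; omega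
          · rw [hSS, hS]
      rw [this, Fintype.card_piFinset]
      have hc : ∀ i, (A i).card = if i ∈ (S ∪ T)ᶜ then (2 * n - 2) else 1 := by
        intro i
        simp only [hA]
        by_cases h1 : i ∈ S
        · simp [h1]
        · by_cases h2 : i ∈ T
          · simp [h1, h2]
          · simp [h1, h2, Finset.card_product, Finset.card_compl]
            omega
      simp_rw [hc]
      rw [Finset.prod_ite_mem, Finset.univ_inter, Finset.prod_const, Finset.card_compl,
        Finset.card_union_of_disjoint hdis, hS, hT]
      congr 2; omega
    rw [Finset.sum_congr rfl hfib, Finset.sum_const, smul_eq_mul]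
    congr 1
    rw [ht, Finset.card_sigma, Finset.sum_congr rfl (g := fun _ => (Fintype.card ι - p).choose (x - p))]
    · rw [Finset.sum_const, Finset.card_powersetCard, hN, smul_eq_mul, Nat.choose_mul hp]
    · intro S hS
      rw [Finset.card_powersetCard, Finset.card_compl, (Finset.mem_powersetCard.1 hS).2]
  · intro g hg
    simp only [Finset.coe_filter, Finset.mem_univ, true_and, Set.mem_ofPred_eq] at hg
    simp only [ht, Finset.mem_coe, Finset.mem_sigma, Finset.mem_powersetCard,
      Finset.subset_univ, true_and]
    refine ⟨hg.2, ?_, ?_⟩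
    · intro i hi
      simp only [Finset.mem_filter, Finset.mem_univ, true_and, Finset.mem_compl] at hi ⊢
      rw [hi]; simp
    · have := hsplit g
      omega

lemma sum_cntG {ι : Type} [Fintype ι] {n : ℕ} (x p : ℕ) (hp : p ≤ x) :
    ∑ g : ι → Fin n × Bool, (cntG x p g : ℝ) =
     n * ((Fintype.card ι).choose x * x.choose p * ((2 * n - 2 : ℕ) : ℝ) ^ (Fintype.card ι - x)) := by
  have : ∑ g : ι → Fin n × Bool, cntG x p g =
     n * ((Fintype.card ι).choose x * x.choose p * (2 * n - 2) ^ (Fintype.card ι - x)) := by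
    unfold cntG
    simp_rw [Finset.card_filter]
    rw [Finset.sum_comm]
    simp_rw [← Finset.card_filter]
    rw [Finset.sum_congr rfl (fun v _ => card_occ v x p hp)]
    simp
  exact_mod_cast this

lemma cheb {ι : Type} [Fintype ι] {n : ℕ} (hn : 0 < n) (x p : ℕ) (δ κ μ : ℝ) (hδ : 0 < δ)
    (hμ : μ = (∑ g : ι → Fin n × Bool, (cntG x p g : ℝ)) / (2 * n : ℝ) ^ (Fintype.card ι))
    (hκ : |μ - κ * n| ≤ δ / 2 * n) :
    ((Finset.univ.filter fun g : ι → Fin n × Bool => δ * n < |(cntG x p g : ℝ) - κ * n|).card : ℝ)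
      ≤ 16 * Fintype.card ι / (δ ^ 2 * n ^ 2) * (2 * n : ℝ) ^ (Fintype.card ι) := by
  haveI : Nonempty (Fin n × Bool) := ⟨(⟨0, hn⟩, true)⟩
  have hn' : (0 : ℝ) < n := by exact_mod_cast hn
  have h := es (ι := ι) (β := Fin n × Bool) 2 (by norm_num) (fun g => (cntG x p g : ℝ))
    (fun g i b => cntG_update x p g i b)
  have hcard : (Fintype.card (Fin n × Bool) : ℝ) = 2 * n := by
    simp [mul_comm]
  rw [hcard, ← hμ] at h
  have h2 : ((Finset.univ.filter fun g : ι → Fin n × Bool =>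
      δ * n < |(cntG x p g : ℝ) - κ * n|).card : ℝ) * (δ / 2 * n) ^ 2
      ≤ ∑ g : ι → Fin n × Bool, ((cntG x p g : ℝ) - μ) ^ 2 := by
    rw [← nsmul_eq_mul, ← Finset.sum_const]
    refine le_trans (Finset.sum_le_sum (g := fun g => ((cntG x p g : ℝ) - μ) ^ 2) ?_)
      (Finset.sum_le_sum_of_subset_of_nonneg (Finset.filter_subset _ _)
        (fun _ _ _ => sq_nonneg _))
    intro g hg
    simp only [Finset.mem_filter, Finset.mem_univ, true_and] at hg
    rw [← sq_abs ((cntG x p g : ℝ) - μ)]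
    apply pow_le_pow_left₀ (by positivity)
    have := abs_sub_le (cntG x p g : ℝ) μ (κ * n)
    nlinarith
  rw [div_mul_eq_mul_div, le_div_iff₀ (by positivity)]
  nlinarith [h2, h]

lemma M_val (c : ℚ) (hc : 0 < c) (n : ℕ) (hn : (c * (n : ℚ)).den = 1) :
    ((3 * (c * (n : ℚ)).num.toNat : ℕ) : ℝ) = 3 * c * n := by
  have h0 : (0 : ℚ) ≤ c * n := by positivity
  have h1 : ((c * (n : ℚ)).num : ℚ) = c * n := (Rat.den_eq_one_iff _).1 hn
  have h2 : (((c * (n : ℚ)).num.toNat : ℤ)) = (c * (n : ℚ)).num :=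
    Int.toNat_of_nonneg (Rat.num_nonneg.2 h0)
  have h3 : (((c * (n : ℚ)).num.toNat : ℕ) : ℚ) = c * n := by
    have : (((c * (n : ℚ)).num.toNat : ℤ) : ℚ) = ((c * (n : ℚ)).num : ℚ) := by rw [h2]
    rw [Int.cast_natCast, h1] at this
    exact this
  have h4 : (((c * (n : ℚ)).num.toNat : ℕ) : ℝ) = c * n := by exact_mod_cast h3
  push_cast
  rw [h4]; ring

lemma p1_limit (c : ℚ) (hc : 0 < c) (x p : ℕ) :
    Tendsto (fun n : ℕ => (((3 * (c * (n : ℚ)).num.toNat).choose x : ℝ) * (x.choose p : ℝ) *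
      ((2 * n - 2 : ℕ) : ℝ) ^ (3 * (c * (n : ℚ)).num.toNat - x))
       / (2 * n : ℝ) ^ (3 * (c * (n : ℚ)).num.toNat))
      (atTop ⊓ 𝓟 {n : ℕ | (c * (n : ℚ)).den = 1}) (nhds (kappa (3 * (c : ℝ)) x p)) := by
  set lam : ℝ := 3 * (c : ℝ) with hlam
  have hc' : (0 : ℝ) < c := by exact_mod_cast hc
  set L := (atTop ⊓ 𝓟 {n : ℕ | (c * (n : ℚ)).den = 1}) with hL
  set M : ℕ → ℕ := fun n => 3 * (c * (n : ℚ)).num.toNat with hM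
  have hMv : ∀ n : ℕ, (c * (n : ℚ)).den = 1 → (M n : ℝ) = lam * n := by
    intro n hn
    exact M_val c hc n hn
  have hev : ∀ᶠ n : ℕ in L, (c * (n : ℚ)).den = 1 := by
    rw [hL]; exact mem_inf_of_right (mem_principal_self _)
  have hat : Tendsto (fun n : ℕ => n) L atTop := tendsto_inf_left tendsto_id
  have hMt : Tendsto M L atTop := by
    rw [← tendsto_natCast_atTop_iff (R := ℝ)]
    have : Tendsto (fun n : ℕ => lam * (n : ℝ)) L atTop :=
      Tendsto.const_mul_atTop (by positivity) (tendsto_natCast_atTop_atTop.comp hat)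
    refine this.congr' ?_
    filter_upwards [hev] with n hn
    rw [hMv n hn]
  have hpois := ProbabilityTheory.tendsto_choose_mul_pow_of_tendsto_mul_atTop
    (p := fun N : ℕ => lam / N) (r := lam) x (by
      refine tendsto_const_nhds.congr' ?_
      filter_upwards [eventually_gt_atTop 0] with N hN
      have : (N : ℝ) ≠ 0 := by positivity
      field_simp)
  have h1 := (hpois.comp hMt).const_mul ((2 : ℝ) ^ (-(x : ℝ)) * (x.choose p : ℝ))
  refine Tendsto.congr' ?_ (h1.trans (le_of_eq ?_))
  · filter_upwards [hev, hat.eventually (eventually_ge_atTop 1),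
      hMt.eventually (eventually_ge_atTop x)] with n hn hn1 hnx
    have hn0 : (0 : ℝ) < n := by exact_mod_cast hn1
    have hl0 : (0 : ℝ) < lam := by positivity
    simp only [Function.comp]
    rw [show (3 * (c * (n : ℚ)).num.toNat) = M n from rfl, hMv n hn]
    have e1 : lam / (lam * n) = 1 / (n : ℝ) := by field_simp
    have e2 : ((2 * n - 2 : ℕ) : ℝ) = 2 * n * (1 - 1 / n) := by
      rw [Nat.cast_sub (by omega)]; push_cast; field_simp
    rw [e1, e2, mul_pow (2 * (n : ℝ))]
    have e3 : (2 * (n : ℝ)) ^ (M n) = (2 * (n : ℝ)) ^ (M n - x) * (2 * (n : ℝ)) ^ x := by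
      rw [← pow_add]; congr 1; omega
    rw [e3, Real.rpow_neg (by norm_num), Real.rpow_natCast]
    rw [mul_pow 2 (n : ℝ) x, one_div_pow]
    field_simp
  · rw [kappa]

/-- number of variables with `x` occurrences, `p` of them positive, in a formula -/
noncomputable def cnt {n m : ℕ} (x p : ℕ) (F : Fin m → Fin 3 → Fin n × Bool) : ℕ :=
  Nat.card {v : Fin n // numOccs F v = x ∧ numPosOccs F v = p}

lemma cnt_eq {n m : ℕ} (x p : ℕ) (F : Fin m → Fin 3 → Fin n × Bool) :
    cnt x p F = cntG x p (Function.uncurry F) := by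
  simp only [cnt, cntG, numOccs, numPosOccs, Nat.card_eq_fintype_card, Fintype.card_subtype,
    Function.uncurry]
  congr!

/-- exceptional fraction tends to zero for one pair -/
lemma bad_limit (c : ℚ) (hc : 0 < c) (x p : ℕ) (hp : p ≤ x) (δ : ℝ) (hδ : 0 < δ) :
    Tendsto (fun n : ℕ => ((Finset.univ.filter
        fun F : Fin ((c * (n : ℚ)).num.toNat) → Fin 3 → Fin n × Bool =>
          δ * n < |(cnt x p F : ℝ) - kappa (3 * (c : ℝ)) x p * n|).card : ℝ)
       / (2 * n : ℝ) ^ (3 * (c * (n : ℚ)).num.toNat))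
      (atTop ⊓ 𝓟 {n : ℕ | (c * (n : ℚ)).den = 1}) (nhds 0) := by
  have hev : ∀ᶠ n : ℕ in (atTop ⊓ 𝓟 {n : ℕ | (c * (n : ℚ)).den = 1}), (c * (n : ℚ)).den = 1 :=
    mem_inf_of_right (mem_principal_self _)
  have hat : Tendsto (fun n : ℕ => n) (atTop ⊓ 𝓟 {n : ℕ | (c * (n : ℚ)).den = 1}) atTop :=
    tendsto_inf_left tendsto_id
  have hlim : Tendsto (fun n : ℕ => 16 * (3 * (c : ℝ)) / δ ^ 2 * (1 / (n : ℝ)))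
      (atTop ⊓ 𝓟 {n : ℕ | (c * (n : ℚ)).den = 1}) (nhds 0) := by
    have := (tendsto_one_div_atTop_nhds_zero_nat (𝕜 := ℝ)).comp hat
    simpa using this.const_mul (16 * (3 * (c : ℝ)) / δ ^ 2)
  refine tendsto_of_tendsto_of_tendsto_of_le_of_le' tendsto_const_nhds hlim
    (Eventually.of_forall fun n => by positivity) ?_
  have h1 := (Metric.tendsto_nhds.1 (p1_limit c hc x p)) (δ / 2) (by positivity)
  filter_upwards [hev, hat.eventually (eventually_ge_atTop 1), h1] with n hn hn1 hd
  have hn0 : (0 : ℝ) < n := by exact_mod_cast hn1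
  set m := (c * (n : ℚ)).num.toNat with hm
  have hcard : Fintype.card (Fin m × Fin 3) = 3 * m := by simp [mul_comm]
  have hch := cheb (ι := Fin m × Fin 3) (n := n) hn1 x p δ (kappa (3 * (c : ℝ)) x p) _ hδ rfl
    (by
      rw [sum_cntG x p hp, hcard, mul_div_assoc, mul_comm (n : ℝ), ← sub_mul, abs_mul,
        abs_of_pos hn0]
      rw [Real.dist_eq] at hd
      exact mul_le_mul_of_nonneg_right hd.le hn0.le)
  rw [hcard, M_val c hc n hn] at hch
  rw [div_le_iff₀ (by positivity)]
  have e : (Finset.univ.filter fun F : Fin m → Fin 3 → Fin n × Bool =>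
          δ * n < |(cnt x p F : ℝ) - kappa (3 * (c : ℝ)) x p * n|).card
      = (Finset.univ.filter fun g : Fin m × Fin 3 → Fin n × Bool =>
          δ * n < |(cntG x p g : ℝ) - kappa (3 * (c : ℝ)) x p * n|).card := by
    refine Finset.card_equiv (Equiv.curry _ _ _).symm ?_
    intro F
    simp only [Finset.mem_filter, Finset.mem_univ, true_and, cnt_eq]
    rfl
  rw [e]
  refine (le_of_eq ?_).trans (hch.trans (le_of_eq ?_))
  · congr!
  congr 1
  field_simp

lemma kappa_nonneg (lam : ℝ) (h : 0 ≤ lam) (x p : ℕ) : 0 ≤ kappa lam x p := by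
  unfold kappa; positivity

lemma kappa_symm (lam : ℝ) (x p : ℕ) (h : p ≤ x) : kappa lam x (x - p) = kappa lam x p := by
  unfold kappa; rw [Nat.choose_symm h]

lemma kappa_hasSum (lam : ℝ) (h : 0 ≤ lam) :
    HasSum (fun q : ℕ × ℕ => kappa lam q.1 q.2) 1 := by
  have hin : ∀ x, HasSum (fun p => kappa lam x p) (Real.exp (-lam) * (lam ^ x / x.factorial)) := by
    intro x
    have h0 : ∀ p ∉ Finset.range (x + 1), kappa lam x p = 0 := by
      intro p hp
      have : x < p := by simpa [Nat.lt_succ_iff] using hp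
      simp [kappa, Nat.choose_eq_zero_of_lt this]
    have := hasSum_sum_of_ne_finset_zero (L := SummationFilter.unconditional ℕ) h0
    convert this using 1
    unfold kappa
    rw [← Finset.sum_mul, ← Finset.mul_sum]
    have e : ∑ i ∈ Finset.range (x + 1), (x.choose i : ℝ) = 2 ^ x := by
      exact_mod_cast Nat.sum_range_choose x
    rw [e, Real.rpow_neg (by norm_num), Real.rpow_natCast]
    field_simp
  have hout : HasSum (fun x : ℕ => Real.exp (-lam) * (lam ^ x / x.factorial)) 1 := by
    have := (NormedSpace.expSeries_div_hasSum_exp (𝔸 := ℝ) lam).mul_left (Real.exp (-lam))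
    rw [← Real.exp_eq_exp_ℝ, ← Real.exp_add] at this
    simpa using this
  have hs : Summable (fun q : ℕ × ℕ => kappa lam q.1 q.2) := by
    rw [summable_prod_of_nonneg (fun q => kappa_nonneg lam h _ _)]
    refine ⟨fun x => (hin x).summable, ?_⟩
    simp_rw [fun x => (hin x).tsum_eq]
    exact hout.summable
  have h2 := hs.hasSum.prod_fiberwise hin
  rw [← h2.unique hout]
  exact hs.hasSum

lemma kappa_sub (lam : ℝ) (h : 0 ≤ lam) (P : ℕ × ℕ → Prop) [DecidablePred P] :
    Summable (fun q : ℕ × ℕ => if P q then kappa lam q.1 q.2 else 0) := by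
  refine Summable.of_nonneg_of_le (fun q => ?_) (fun q => ?_) (kappa_hasSum lam h).summable
  · split_ifs
    · exact kappa_nonneg lam h _ _
    · exact le_rfl
  · split_ifs
    · exact le_rfl
    · exact kappa_nonneg lam h _ _

lemma diag_inj : Function.Injective (fun p : ℕ => ((2 * p, p) : ℕ × ℕ)) := by
  intro a b hab
  simpa using congrArg Prod.snd hab

lemma kappa_diag (lam : ℝ) : ∑' p : ℕ, kappa lam (2 * p) p
    = ∑' q : ℕ × ℕ, if q.1 = 2 * q.2 then kappa lam q.1 q.2 else 0 := by
  rw [← diag_inj.tsum_eq (f := fun q : ℕ × ℕ => if q.1 = 2 * q.2 then kappa lam q.1 q.2 else 0)]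
  · simp
  · rintro ⟨a, b⟩ hab
    have h1 : a = 2 * b := by
      by_contra hne
      exact hab (if_neg hne)
    exact ⟨b, by rw [h1]⟩

/-- the reflection `(x, p) ↦ (x, x - p)` -/
def reflPair (q : ℕ × ℕ) : ℕ × ℕ := if q.2 ≤ q.1 then (q.1, q.1 - q.2) else q

lemma reflPair_invol : Function.Involutive reflPair := by
  rintro ⟨a, b⟩
  by_cases hb : b ≤ a
  · simp [reflPair, hb]
    omega
  · simp [reflPair, hb]

lemma kappa_refl (lam : ℝ) :
    (∑' q : ℕ × ℕ, if 2 * q.2 < q.1 then kappa lam q.1 q.2 else 0)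
      = ∑' q : ℕ × ℕ, if q.1 < 2 * q.2 then kappa lam q.1 q.2 else 0 := by
  rw [← (reflPair_invol.toPerm reflPair).tsum_eq]
  refine tsum_congr ?_
  rintro ⟨a, b⟩
  simp only [Function.Involutive.coe_toPerm]
  by_cases hb : b ≤ a
  · simp only [reflPair, hb, if_true, kappa_symm lam a b hb]
    refine if_congr ?_ rfl rfl
    omega
  · have : kappa lam a b = 0 := by
      simp [kappa, Nat.choose_eq_zero_of_lt (not_le.1 hb)]
    simp [reflPair, hb, this]

lemma kappa_split (lam : ℝ) (h : 0 ≤ lam) :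
    (∑' q : ℕ × ℕ, if 2 * q.2 < q.1 then kappaT lam q.1 q.2 else 0)
      + ∑' p : ℕ, kappa lam (2 * p) p = 1 := by
  have e1 : (∑' q : ℕ × ℕ, if 2 * q.2 < q.1 then kappaT lam q.1 q.2 else 0)
      = (∑' q : ℕ × ℕ, if 2 * q.2 < q.1 then kappa lam q.1 q.2 else 0)
       + ∑' q : ℕ × ℕ, if q.1 < 2 * q.2 then kappa lam q.1 q.2 else 0 := by
    rw [← kappa_refl, ← two_mul, ← tsum_mul_left]
    refine tsum_congr fun q => ?_
    by_cases hq : 2 * q.2 < q.1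
    · simp [kappaT, hq, not_lt.2 hq.le]
    · simp [hq]
  have s1 := kappa_sub lam h (fun q => 2 * q.2 < q.1)
  have s2 := kappa_sub lam h (fun q => q.1 < 2 * q.2)
  have s3 := kappa_sub lam h (fun q => q.1 = 2 * q.2)
  rw [e1, kappa_diag, ← s1.tsum_add s2, ← (s1.add s2).tsum_add s3,
    ← (kappa_hasSum lam h).tsum_eq]
  refine tsum_congr fun q => ?_
  rcases lt_trichotomy q.1 (2 * q.2) with hq | hq | hq
  · simp [hq, not_lt.2 hq.le, hq.ne]
  · simp [hq]
  · simp [hq, not_lt.2 hq.le, hq.ne']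

lemma kappa_diag_summable (lam : ℝ) (h : 0 ≤ lam) :
    Summable (fun p : ℕ => kappa lam (2 * p) p) := by
  have h1 := (kappa_hasSum lam h).summable.comp_injective diag_inj
  simp only [Function.comp_def] at h1
  exact h1

lemma kappa_bound (lam : ℝ) (h : 0 ≤ lam) (k : ℕ) :
    1 - ∑ p ∈ Finset.range (k + 1), kappa lam (2 * p) p ≤
     (∑' q : ℕ × ℕ, if 2 * q.2 < q.1 then kappaT lam q.1 q.2 else 0)
      + ∑' p : ℕ, if 2 * k < 2 * p then kappa lam (2 * p) p else 0 := by
  have hsm := kappa_diag_summable lam h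
  have hsp := kappa_split lam h
  have h1 : ∑' p : ℕ, kappa lam (2 * p) p =
      ∑ p ∈ Finset.range (k + 1), kappa lam (2 * p) p
        + ∑' p : ℕ, if 2 * k < 2 * p then kappa lam (2 * p) p else 0 := by
    have ha : HasSum (fun p => if p ∈ Finset.range (k + 1) then kappa lam (2 * p) p else 0)
        (∑ p ∈ Finset.range (k + 1), kappa lam (2 * p) p) := by
      have := hasSum_sum_of_ne_finset_zero (L := SummationFilter.unconditional ℕ) (s := Finset.range (k + 1))
        (f := fun p => if p ∈ Finset.range (k + 1) then kappa lam (2 * p) p else 0)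
        (fun p hp => if_neg hp)
      convert this using 1
      exact Finset.sum_congr rfl fun p hp => (if_pos hp).symm
    have hb : Summable (fun p : ℕ => if 2 * k < 2 * p then kappa lam (2 * p) p else 0) := by
      refine Summable.of_nonneg_of_le (fun q => ?_) (fun q => ?_) hsm
      · split_ifs
        · exact kappa_nonneg lam h _ _
        · exact le_rfl
      · split_ifs
        · exact le_rfl
        · exact kappa_nonneg lam h _ _
    rw [← ha.tsum_eq, ← ha.summable.tsum_add hb]
    refine tsum_congr fun p => ?_
    by_cases hp : p ≤ k
    · simp [hp, not_lt.2 hp]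
    · simp [hp, not_le.1 hp]
  linarith

/-- flip the signs of all occurrences of the variables selected by `T` -/
def flipF {n m : ℕ} (T : Fin n → Bool) (F : Fin m → Fin 3 → Fin n × Bool) :
    Fin m → Fin 3 → Fin n × Bool :=
  fun i j => ((F i j).1, xor (F i j).2 (T (F i j).1))

lemma flipF_flipF {n m : ℕ} (T : Fin n → Bool) (F : Fin m → Fin 3 → Fin n × Bool) :
    flipF T (flipF T F) = F := by
  funext i j
  simp [flipF]

lemma numOccs_flipF {n m : ℕ} (T : Fin n → Bool) (F : Fin m → Fin 3 → Fin n × Bool) (v : Fin n) :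
    numOccs (flipF T F) v = numOccs F v := rfl

/-- number of negative occurrences -/
noncomputable def numNegOccs {n m : ℕ} (F : Fin m → Fin 3 → Fin n × Bool) (v : Fin n) : ℕ :=
  Nat.card {ij : Fin m × Fin 3 // F ij.1 ij.2 = (v, false)}

lemma occ_split {n m : ℕ} (F : Fin m → Fin 3 → Fin n × Bool) (v : Fin n) :
    numOccs F v = numPosOccs F v + numNegOccs F v := by
  simp only [numOccs, numPosOccs, numNegOccs, Nat.card_eq_fintype_card, Fintype.card_subtype]
  rw [← Finset.card_union_of_disjoint]
  · congr 1
    ext i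
    simp only [Finset.mem_filter, Finset.mem_univ, true_and, Finset.mem_union]
    rcases h : F i.1 i.2 with ⟨w, b⟩
    cases b <;> simp
  · rw [Finset.disjoint_filter]
    intro i _ h1 h2
    rw [h1] at h2
    simp at h2

lemma pos_flip_false {n m : ℕ} (T : Fin n → Bool) (F : Fin m → Fin 3 → Fin n × Bool) (v : Fin n)
    (h : T v = false) : numPosOccs (flipF T F) v = numPosOccs F v := by
  unfold numPosOccs
  congr 2
  funext ij
  rcases hF : F ij.1 ij.2 with ⟨w, b⟩
  simp only [flipF, hF, Prod.mk.injEq, eq_iff_iff]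
  constructor
  · rintro ⟨rfl, h2⟩; rw [h] at h2; simpa using h2
  · rintro ⟨rfl, h2⟩; rw [h]; simpa using h2

lemma pos_flip_true {n m : ℕ} (T : Fin n → Bool) (F : Fin m → Fin 3 → Fin n × Bool) (v : Fin n)
    (h : T v = true) : numPosOccs (flipF T F) v = numNegOccs F v := by
  unfold numPosOccs numNegOccs
  congr 2
  funext ij
  rcases hF : F ij.1 ij.2 with ⟨w, b⟩
  simp only [flipF, hF, Prod.mk.injEq, eq_iff_iff]
  constructor
  · rintro ⟨rfl, h2⟩; rw [h] at h2; simpa using h2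
  · rintro ⟨rfl, h2⟩; rw [h]; simpa using h2

lemma sat_flip {n m : ℕ} (T : Fin n → Bool) (F : Fin m → Fin 3 → Fin n × Bool)
    (h : ∃ A, Satisfies F A) : ∃ A, Satisfies (flipF T F) A := by
  obtain ⟨A, hA⟩ := h
  refine ⟨fun v => xor (A v) (T v), fun i => ?_⟩
  obtain ⟨j, hj⟩ := hA i
  exact ⟨j, by simp [flipF, hj]⟩

/-- the set of variables to flip -/
noncomputable def flipSet {n m : ℕ} (F : Fin m → Fin 3 → Fin n × Bool) : Fin n → Bool :=
  fun v => decide (numOccs F v < 2 * numPosOccs F v)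

/-- the totally unbalanced version of a formula -/
noncomputable def unb {n m : ℕ} (F : Fin m → Fin 3 → Fin n × Bool) : Fin m → Fin 3 → Fin n × Bool :=
  flipF (flipSet F) F

lemma pos_unb {n m : ℕ} (F : Fin m → Fin 3 → Fin n × Bool) (v : Fin n) :
    numPosOccs (unb F) v = min (numPosOccs F v) (numNegOccs F v) := by
  have hs := occ_split F v
  by_cases h : numOccs F v < 2 * numPosOccs F v
  · rw [unb, pos_flip_true _ _ _ (by simp [flipSet, h])]
    omega
  · rw [unb, pos_flip_false _ _ _ (by simp [flipSet, h])]
    omega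

lemma occ_unb {n m : ℕ} (F : Fin m → Fin 3 → Fin n × Bool) (v : Fin n) :
    numOccs (unb F) v = numOccs F v := rfl

lemma cnt_filter {n m : ℕ} (x p : ℕ) (F : Fin m → Fin 3 → Fin n × Bool) :
    cnt x p F = (Finset.univ.filter fun v : Fin n =>
      numOccs F v = x ∧ numPosOccs F v = p).card := by
  simp only [cnt, Nat.card_eq_fintype_card, Fintype.card_subtype]

lemma cnt_unb_lt {n m : ℕ} (x p : ℕ) (h : x < 2 * p) (F : Fin m → Fin 3 → Fin n × Bool) :
    cnt x p (unb F) = 0 := by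
  rw [cnt_filter, Finset.card_eq_zero, Finset.filter_eq_empty_iff]
  rintro v - ⟨h1, h2⟩
  rw [pos_unb] at h2
  rw [occ_unb, occ_split] at h1
  omega

lemma cnt_unb_eq {n m : ℕ} (x p : ℕ) (h : x = 2 * p) (F : Fin m → Fin 3 → Fin n × Bool) :
    cnt x p (unb F) = cnt x p F := by
  rw [cnt_filter, cnt_filter]
  congr 1
  ext v
  simp only [Finset.mem_filter, Finset.mem_univ, true_and, pos_unb, occ_unb]
  rw [occ_split]
  omega

lemma cnt_unb_gt {n m : ℕ} (x p : ℕ) (h : 2 * p < x) (F : Fin m → Fin 3 → Fin n × Bool) :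
    cnt x p (unb F) = cnt x p F + cnt x (x - p) F := by
  rw [cnt_filter, cnt_filter, cnt_filter, ← Finset.card_union_of_disjoint]
  · congr 1
    ext v
    simp only [Finset.mem_filter, Finset.mem_univ, true_and, pos_unb, occ_unb, Finset.mem_union]
    rw [occ_split]
    omega
  · rw [Finset.disjoint_filter]
    rintro v - ⟨h1, h2⟩ ⟨h3, h4⟩
    omega

/-- typical formulae -/
def Typ {n m : ℕ} (lam δ : ℝ) (xmax : ℕ) (F : Fin m → Fin 3 → Fin n × Bool) : Prop :=
  ∀ x p : ℕ, p ≤ x → x ≤ xmax → |(cnt x p F : ℝ) - kappa lam x p * n| ≤ δ * n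

lemma obeys_unb {n m : ℕ} (lam ε : ℝ) (hε : 0 < ε) (xmax : ℕ) (F : Fin m → Fin 3 → Fin n × Bool)
    (h : Typ lam (ε / 2) xmax F) : ObeysKT lam ε xmax (unb F) := by
  intro x p hpx hx
  change _ ≤ (cnt x p (unb F) : ℝ) ∧ (cnt x p (unb F) : ℝ) ≤ _
  have hn : (0 : ℝ) ≤ n := by positivity
  have hen : 0 ≤ ε * n := by positivity
  have h1 := abs_le.1 (h x p hpx hx)
  rcases lt_trichotomy x (2 * p) with hq | hq | hq
  · rw [cnt_unb_lt x p hq]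
    simp only [kappaT, hq, if_true, Nat.cast_zero]
    constructor <;> linarith
  · rw [cnt_unb_eq x p hq]
    have : kappaT lam x p = kappa lam x p := by
      rw [kappaT, if_neg (by omega), if_neg (by omega)]
    rw [this]
    constructor <;> linarith [h1.1, h1.2]
  · rw [cnt_unb_gt x p hq]
    have : kappaT lam x p = 2 * kappa lam x p := by
      rw [kappaT, if_neg (by omega), if_pos hq]
    rw [this]
    have h2 := abs_le.1 (h x (x - p) (by omega) hx)
    rw [kappa_symm lam x p hpx] at h2
    push_cast
    constructor <;> linarith [h1.1, h1.2, h2.1, h2.2]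

/-- number of strictly unbalanced variables -/
noncomputable def numU {n m : ℕ} (F : Fin m → Fin 3 → Fin n × Bool) : ℕ :=
  (Finset.univ.filter fun v : Fin n => numOccs F v ≠ 2 * numPosOccs F v).card

lemma numU_le {n m : ℕ} (lam δ : ℝ) (k : ℕ) (F : Fin m → Fin 3 → Fin n × Bool)
    (h : Typ lam δ (2 * k) F) :
    (numU F : ℝ) ≤ ((1 - ∑ p ∈ Finset.range (k + 1), kappa lam (2 * p) p) + δ * (k + 1)) * n := by
  have h1 : numU F + ∑ p ∈ Finset.range (k + 1), cnt (2 * p) p F ≤ n := by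
    simp_rw [cnt_filter]
    rw [← Finset.card_biUnion]
    · unfold numU
      rw [← Finset.card_union_of_disjoint]
      · exact (Finset.card_le_univ _).trans (by simp)
      · rw [Finset.disjoint_left]
        intro v hv hv'
        simp only [Finset.mem_filter, Finset.mem_univ, true_and, Finset.mem_biUnion] at hv hv'
        obtain ⟨p, -, h1, h2⟩ := hv'
        omega
    · intro p _ q _ hpq
      simp only [Function.onFun]
      rw [Finset.disjoint_filter]
      rintro v - ⟨h1, h2⟩ ⟨h3, h4⟩
      omega
  have h2 : (numU F : ℝ) + ∑ p ∈ Finset.range (k + 1), (cnt (2 * p) p F : ℝ) ≤ n := by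
    exact_mod_cast h1
  have h3 : ∑ p ∈ Finset.range (k + 1), (kappa lam (2 * p) p * n - δ * n)
      ≤ ∑ p ∈ Finset.range (k + 1), (cnt (2 * p) p F : ℝ) := by
    refine Finset.sum_le_sum fun p hp => ?_
    have hp' : p ≤ k := by simpa [Nat.lt_succ_iff] using hp
    linarith [(abs_le.1 (h (2 * p) p (by omega) (by omega))).1]
  rw [Finset.sum_sub_distrib, ← Finset.sum_mul, Finset.sum_const, Finset.card_range,
    nsmul_eq_mul] at h3
  push_cast at h3
  linarith

lemma exists_pps {n m : ℕ} (F : Fin m → Fin 3 → Fin n × Bool) (h : ∃ A, Satisfies F A) :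
    ∃ A, IsPPS F A := by
  obtain ⟨A, hA, hmin⟩ := Finset.exists_min_image
    (Finset.univ.filter fun A : Fin n → Bool => Satisfies F A)
    (fun A => (Finset.univ.filter fun v => A v = true).card)
    (by obtain ⟨A, hA⟩ := h; exact ⟨A, by simpa using hA⟩)
  simp only [Finset.mem_filter, Finset.mem_univ, true_and] at hA hmin
  refine ⟨A, hA, fun v hv hs => ?_⟩
  have h1 := hmin _ hs
  refine absurd h1 (not_le.2 (Finset.card_lt_card ?_))
  rw [Finset.ssubset_iff_of_subset]
  · exact ⟨v, by simpa using hv, by simp⟩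
  · intro w hw
    simp only [Finset.mem_filter, Finset.mem_univ, true_and] at hw ⊢
    by_cases hwv : w = v
    · rw [hwv]; exact hv
    · rwa [Function.update_of_ne hwv] at hw

lemma fiber_le {n m : ℕ} (G : Fin m → Fin 3 → Fin n × Bool)
    (s : Finset (Fin m → Fin 3 → Fin n × Bool)) (u : ℕ) (hs : ∀ F ∈ s, numU F ≤ u)
    (hG : ∀ F ∈ s, unb F = G) : s.card ≤ 2 ^ u := by
  rcases s.eq_empty_or_nonempty with rfl | ⟨F0, hF0⟩
  · simp
  set U : Finset (Fin n) := Finset.univ.filter fun v => numOccs F0 v ≠ 2 * numPosOccs F0 v with hU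
  have hUu : U.card ≤ u := hs F0 hF0
  have hbal : ∀ F ∈ s, ∀ v, numOccs F v = 2 * numPosOccs F v ↔
      numOccs G v = 2 * numPosOccs G v := by
    intro F hF v
    rw [← hG F hF, pos_unb, occ_unb, occ_split]
    omega
  calc s.card ≤ U.powerset.card := by
        refine Finset.card_le_card_of_injOn
          (fun F => Finset.univ.filter fun v => flipSet F v = true) ?_ ?_
        · intro F hF
          simp only [Finset.mem_coe, Finset.mem_powerset]
          intro v hv
          simp only [Finset.mem_filter, Finset.mem_univ, true_and, flipSet,
            decide_eq_true_eq] at hv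
          simp only [hU, Finset.mem_filter, Finset.mem_univ, true_and]
          intro hc
          rw [hbal F0 hF0 v, ← hbal F hF v] at hc
          omega
        · intro F hF F' hF' hFF
          have e : flipSet F = flipSet F' := by
            funext v
            have := congrArg (fun S : Finset (Fin n) => v ∈ S) hFF
            simp only [Finset.mem_filter, Finset.mem_univ, true_and, eq_iff_iff] at this
            exact Bool.eq_iff_iff.2 this
          rw [← flipF_flipF (flipSet F) F, ← flipF_flipF (flipSet F') F']
          change flipF (flipSet F) (unb F) = flipF (flipSet F') (unb F')
          rw [hG F hF, hG F' hF', e]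
    _ = 2 ^ U.card := Finset.card_powerset _
    _ ≤ 2 ^ u := Nat.pow_le_pow_right (by norm_num) hUu

lemma typ_sat_le {n m : ℕ} (lam ε : ℝ) (hlam : 0 ≤ lam) (hε : 0 < ε) (k : ℕ) :
    ((Finset.univ.filter fun F : Fin m → Fin 3 → Fin n × Bool =>
      Typ lam (ε / 2) (2 * k) F ∧ ∃ A, Satisfies F A).card : ℝ) ≤
    (2 : ℝ) ^ (((∑' p : ℕ, if 2 * k < 2 * p then kappa lam (2 * p) p else 0)
              + ε * (((k : ℝ) + 1) / 2)) * (n : ℝ)) *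
      ∑ F : Fin m → Fin 3 → Fin n × Bool,
              (if ObeysKT lam ε (2 * k) F then
                  (2 : ℝ) ^ ((∑' q : ℕ × ℕ,
                      if 2 * q.2 < q.1 then kappaT lam q.1 q.2 else 0) * (n : ℝ)) *
                    (Nat.card {A : Fin n → Bool // IsPPS F A} : ℝ)
                else 0) := by
  set ρ := (∑' p : ℕ, if 2 * k < 2 * p then kappa lam (2 * p) p else 0) with hρ
  set σ := (∑' q : ℕ × ℕ, if 2 * q.2 < q.1 then kappaT lam q.1 q.2 else 0) with hσ
  set S := (Finset.univ.filter fun F : Fin m → Fin 3 → Fin n × Bool =>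
      Typ lam (ε / 2) (2 * k) F ∧ ∃ A, Satisfies F A) with hS
  set r : ℝ := (σ + ρ + ε * (((k : ℝ) + 1) / 2)) * n with hr
  have hu : ∀ F ∈ S, (numU F : ℝ) ≤ r := by
    intro F hF
    simp only [hS, Finset.mem_filter, Finset.mem_univ, true_and] at hF
    refine (numU_le lam (ε / 2) k F hF.1).trans ?_
    have := kappa_bound lam hlam k
    rw [hr]
    refine mul_le_mul_of_nonneg_right ?_ (by positivity)
    linarith
  have h1 : S.card ≤ 2 ^ ⌊r⌋₊ * (S.image unb).card := by
    refine Finset.card_le_mul_card_image S _ ?_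
    intro G _
    refine fiber_le G _ _ ?_ ?_
    · intro F hF
      exact Nat.le_floor (hu F (Finset.mem_filter.1 hF).1)
    · intro F hF
      exact (Finset.mem_filter.1 hF).2
  have h2 : ((S.image unb).card : ℝ) ≤ ∑ F : Fin m → Fin 3 → Fin n × Bool,
      if ObeysKT lam ε (2 * k) F then (Nat.card {A : Fin n → Bool // IsPPS F A} : ℝ) else 0 := by
    rw [Finset.card_eq_sum_ones, Nat.cast_sum]
    refine le_trans (Finset.sum_le_sum (g := fun F => if ObeysKT lam ε (2 * k) F then
      (Nat.card {A : Fin n → Bool // IsPPS F A} : ℝ) else 0) ?_)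
      (Finset.sum_le_sum_of_subset_of_nonneg (Finset.subset_univ _) ?_)
    · intro G hG
      obtain ⟨F, hF, rfl⟩ := Finset.mem_image.1 hG
      simp only [hS, Finset.mem_filter, Finset.mem_univ, true_and] at hF
      rw [if_pos (obeys_unb lam ε hε (2 * k) F hF.1)]
      obtain ⟨A, hA⟩ := exists_pps (unb F) (sat_flip _ F hF.2)
      haveI : Nonempty {A : Fin n → Bool // IsPPS (unb F) A} := ⟨⟨A, hA⟩⟩
      exact_mod_cast Nat.card_pos
    · intro F _ _
      split_ifs <;> positivity
  rcases S.eq_empty_or_nonempty with hSe | ⟨F0, hF0⟩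
  · rw [hSe, Finset.card_empty, Nat.cast_zero]
    refine mul_nonneg (by positivity) (Finset.sum_nonneg fun F _ => ?_)
    split_ifs <;> positivity
  have hr0 : 0 ≤ r := le_trans (by positivity) (hu F0 hF0)
  have h3 : (S.card : ℝ) ≤ (2 : ℝ) ^ ⌊r⌋₊ * ((S.image unb).card : ℝ) := by exact_mod_cast h1
  have h4 : (2 : ℝ) ^ ⌊r⌋₊ ≤ (2 : ℝ) ^ r := by
    rw [← Real.rpow_natCast]
    exact Real.rpow_le_rpow_of_exponent_le (by norm_num) (Nat.floor_le hr0)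
  calc (S.card : ℝ) ≤ (2 : ℝ) ^ r * ∑ F : Fin m → Fin 3 → Fin n × Bool,
      (if ObeysKT lam ε (2 * k) F then (Nat.card {A : Fin n → Bool // IsPPS F A} : ℝ) else 0) :=
        h3.trans (mul_le_mul h4 h2 (by positivity) (by positivity))
    _ = _ := by
      have e : r = (ρ + ε * (((k : ℝ) + 1) / 2)) * n + σ * n := by rw [hr]; ring
      rw [e, Real.rpow_add (by norm_num), mul_assoc, Finset.mul_sum]
      congr 1
      refine Finset.sum_congr rfl fun F _ => ?_
      rw [mul_ite, mul_zero]

/-- domination of the satisfiability probability by the skewed expectation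
of PPSs of typical totally unbalanced formulae.  With `ρ = Σ_{2p > xmax} κ_{2p,p}`,
`Δ = (xmax/2 + 1)/2` and `s = Σ_{x > 2p} κ̃_{x,p}`, if
`2^{(ρ + εΔ)n} · E[X] → 0` (where `X(F) = 2^{s n} · #PPS(F)` on formulae obeying `κ̃`
to accuracy `(ε, xmax)`, and `0` otherwise), then the probability of satisfiability
tends to `0` as `n → ∞` along the integers `n` with `c·n ∈ ℕ`. -/
theorem sat_prob_dominated_by_skewed_PPS_expectation
    (c : ℚ) (hc : 0 < c) (xmax : ℕ) (hx : 0 < xmax) (hev : Even xmax)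
    (ε : ℝ) (hε : 0 < ε)
    (H : Tendsto (fun n : ℕ =>
        (2 : ℝ) ^ (((∑' p : ℕ, if xmax < 2 * p then kappa (3 * (c : ℝ)) (2 * p) p else 0)
              + ε * (((xmax : ℝ) / 2 + 1) / 2)) * (n : ℝ)) *
          ((∑ F : Fin ((c * (n : ℚ)).num.toNat) → Fin 3 → Fin n × Bool,
              (if ObeysKT (3 * (c : ℝ)) ε xmax F then
                  (2 : ℝ) ^ ((∑' q : ℕ × ℕ,
                      if 2 * q.2 < q.1 then kappaT (3 * (c : ℝ)) q.1 q.2 else 0) * (n : ℝ)) *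
                    (Nat.card {A : Fin n → Bool // IsPPS F A} : ℝ)
                else 0)) /
            ((2 * (n : ℝ)) ^ (3 * (c * (n : ℚ)).num.toNat))))
      (atTop ⊓ 𝓟 {n : ℕ | (c * (n : ℚ)).den = 1}) (nhds 0)) :
    Tendsto (fun n : ℕ =>
        (Nat.card {F : Fin ((c * (n : ℚ)).num.toNat) → Fin 3 → Fin n × Bool //
            ∃ A : Fin n → Bool, Satisfies F A} : ℝ) /
          ((2 * (n : ℝ)) ^ (3 * (c * (n : ℚ)).num.toNat)))
      (atTop ⊓ 𝓟 {n : ℕ | (c * (n : ℚ)).den = 1}) (nhds 0) := by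
  obtain ⟨k, hk⟩ := hev
  have hk2 : xmax = 2 * k := by omega
  subst hk2
  clear hk
  have hc' : (0 : ℝ) < c := by exact_mod_cast hc
  have hlam : (0 : ℝ) ≤ 3 * (c : ℝ) := by positivity
  set I : Finset (ℕ × ℕ) :=
    ((Finset.range (2 * k + 1)) ×ˢ (Finset.range (2 * k + 1))).filter (fun q => q.2 ≤ q.1) with hI
  have hbad : Tendsto (fun n : ℕ => ∑ q ∈ I, ((Finset.univ.filter
        fun F : Fin ((c * (n : ℚ)).num.toNat) → Fin 3 → Fin n × Bool =>
          ε / 2 * n < |(cnt q.1 q.2 F : ℝ) - kappa (3 * (c : ℝ)) q.1 q.2 * n|).card : ℝ)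
       / (2 * n : ℝ) ^ (3 * (c * (n : ℚ)).num.toNat))
      (atTop ⊓ 𝓟 {n : ℕ | (c * (n : ℚ)).den = 1}) (nhds 0) := by
    have := tendsto_finsetSum I (fun q hq => bad_limit c hc q.1 q.2
      (Finset.mem_filter.1 hq).2 (ε / 2) (by positivity))
    simpa using this
  have htot := H.add hbad
  rw [add_zero] at htot
  refine tendsto_of_tendsto_of_tendsto_of_le_of_le tendsto_const_nhds htot
    (fun n => by positivity) (fun n => ?_)
  have hts := typ_sat_le (n := n) (m := (c * (n : ℚ)).num.toNat) (3 * (c : ℝ)) ε hlam hε k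
  have hkk : (((2 * k : ℕ) : ℝ) / 2 + 1) / 2 = ((k : ℝ) + 1) / 2 := by push_cast; ring
  simp only [hkk]
  rw [← Finset.sum_div, ← mul_div_assoc, ← add_div]
  refine div_le_div_of_nonneg_right ?_ (by positivity)
  refine le_trans ?_ (add_le_add_left hts _)
  rw [Nat.card_eq_fintype_card, Fintype.card_subtype]
  have hsub : (Finset.univ.filter fun F : Fin ((c * (n : ℚ)).num.toNat) → Fin 3 → Fin n × Bool =>
      ∃ A, Satisfies F A) ⊆
      (Finset.univ.filter fun F : Fin ((c * (n : ℚ)).num.toNat) → Fin 3 → Fin n × Bool =>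
        Typ (3 * (c : ℝ)) (ε / 2) (2 * k) F ∧ ∃ A, Satisfies F A) ∪
      I.biUnion (fun q => Finset.univ.filter
        fun F : Fin ((c * (n : ℚ)).num.toNat) → Fin 3 → Fin n × Bool =>
          ε / 2 * n < |(cnt q.1 q.2 F : ℝ) - kappa (3 * (c : ℝ)) q.1 q.2 * n|) := by
    intro F hF
    simp only [Finset.mem_filter, Finset.mem_univ, true_and, Finset.mem_union,
      Finset.mem_biUnion] at hF ⊢
    by_cases hT : Typ (3 * (c : ℝ)) (ε / 2) (2 * k) F
    · exact Or.inl ⟨hT, hF⟩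
    · right
      unfold Typ at hT
      push Not at hT
      obtain ⟨x, p, hpx, hx', hb⟩ := hT
      refine ⟨(x, p), ?_, hb⟩
      simp only [hI, Finset.mem_filter, Finset.mem_product, Finset.mem_range]
      omega
  have h1 := (Finset.card_le_card hsub).trans ((Finset.card_union_le _ _).trans
    (Nat.add_le_add_left Finset.card_biUnion_le _))
  have h2 := (Nat.cast_le (α := ℝ)).2 h1
  push_cast at h2
  exact h2
end

section
/- Let L be the function L(η) = (2η)^{−2η} on the positive reals. Whenever x, y, η are positive reals with η ≤ 0.05, |x − y| ≤ η, and x ≤ 30, one has L(η)^{−1} ≤ y^y / x^x ≤ L(η). -/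
lemma tangent_aux (p q : ℝ) (hp : 0 < p) (hq : 0 < q) :
    q * Real.log q + (p - q) * (1 + Real.log q) ≤ p * Real.log p := by
  have h := Real.log_le_sub_one_of_pos (div_pos hq hp)
  rw [Real.log_div hq.ne' hp.ne'] at h
  have h2 := mul_le_mul_of_nonneg_left h hp.le
  have h3 : p * (q / p - 1) = q - p := by field_simp
  rw [h3] at h2
  nlinarith

lemma key_aux (a b η : ℝ) (ha : 0 < a) (hab : a ≤ b) (hη : 0 < η)
    (hη' : η ≤ 0.05) (hd : b - a ≤ η) (hb : b ≤ 30.05) :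
    b * Real.log b - a * Real.log a ≤ -(2 * η) * Real.log (2 * η) ∧
    a * Real.log a - b * Real.log b ≤ -(2 * η) * Real.log (2 * η) := by
  have hb0 : 0 < b := lt_of_lt_of_le ha hab
  have he := Real.exp_one_lt_d9
  have hη2 : η ≤ 1 / 20 := by norm_num at hη' ⊢; linarith
  have hb2 : b ≤ 601 / 20 := by norm_num at hb ⊢; linarith
  constructor
  · have h1 := tangent_aux a b ha hb0
    have hK : 1 + Real.log b ≤ -2 * Real.log (2 * η) := by
      have : Real.log (Real.exp 1 * b * (2 * η) ^ 2) ≤ 0 := by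
        apply Real.log_nonpos (by positivity)
        have h1 : Real.exp 1 * b ≤ 100 := by nlinarith
        have h2 : (2 * η) ^ 2 ≤ 1 / 100 := by nlinarith
        calc _ ≤ 100 * (1 / 100 : ℝ) := by gcongr
          _ = 1 := by norm_num
      rw [Real.log_mul (by positivity) (by positivity),
        Real.log_mul (by positivity) (by positivity), Real.log_exp, Real.log_pow] at this
      push_cast at this
      linarith
    have hL : Real.log (2 * η) ≤ 0 := Real.log_nonpos (by positivity) (by linarith)
    have h2 := mul_le_mul_of_nonneg_left hK (sub_nonneg.2 hab)
    have h3 := mul_le_mul_of_nonneg_right hd (show 0 ≤ -2 * Real.log (2 * η) by linarith)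
    linarith
  · have hK : Real.log (2 * η) * 2 ≤ Real.log η := by
      have : Real.log ((2 * η) ^ 2) ≤ Real.log η :=
        Real.log_le_log (by positivity) (by nlinarith)
      rw [Real.log_pow] at this
      push_cast at this
      linarith
    have hK2 := mul_le_mul_of_nonneg_left hK hη.le
    have hneg : 1 + Real.log η ≤ 0 := by
      have : Real.log (Real.exp 1 * η) ≤ 0 := 
        Real.log_nonpos (by positivity) (by nlinarith)
      rwa [Real.log_mul (by positivity) (by positivity), Real.log_exp] at this
    have hlog := mul_le_mul_of_nonneg_left (Real.log_le_log ha hab) ha.le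
    rcases hab.eq_or_lt with h | h
    · subst h
      have hL : Real.log η ≤ 0 := by linarith
      nlinarith
    · have hd0 : 0 < b - a := sub_pos.2 h
      have h1 := tangent_aux (b - a) η hd0 hη
      have h2 := mul_le_mul_of_nonneg_left
        (Real.log_le_log hd0 (show b - a ≤ b by linarith)) hd0.le
      have h3 := mul_nonneg_of_nonpos_of_nonpos (sub_nonpos.2 hd) hneg
      linarith


/-- with `L(η) = (2η)^{−2η}`, whenever `0 < η ≤ 0.05`, `|x − y| ≤ η`,
`x, y > 0` and `x ≤ 30`, one has `L(η)⁻¹ ≤ y^y / x^x ≤ L(η)`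
(here `t^t = exp(t log t)` is the real power). -/
theorem powers_close_lemma (x y η : ℝ) (hx : 0 < x) (hy : 0 < y) (hη : 0 < η)
    (hη' : η ≤ 0.05) (hxy : |x - y| ≤ η) (hx30 : x ≤ 30) :
    ((2 * η) ^ (-(2 * η)))⁻¹ ≤ y ^ y / x ^ x ∧
      y ^ y / x ^ x ≤ (2 * η) ^ (-(2 * η)) := by

  obtain ⟨h1, h2⟩ := abs_le.1 hxy
  have hη2 : η ≤ 1 / 20 := by norm_num at hη' ⊢; linarith
  have key : y * Real.log y - x * Real.log x ≤ -(2 * η) * Real.log (2 * η) ∧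
      x * Real.log x - y * Real.log y ≤ -(2 * η) * Real.log (2 * η) := by
    rcases le_total x y with h | h
    · exact key_aux x y η hx h hη hη' (by linarith) (by norm_num; linarith)
    · exact (key_aux y x η hy h hη hη' (by linarith) (by norm_num; linarith)).symm
  have h2η : 0 < 2 * η := by positivity
  rw [Real.rpow_def_of_pos h2η, Real.rpow_def_of_pos hx, Real.rpow_def_of_pos hy,
    ← Real.exp_neg, ← Real.exp_sub, Real.exp_le_exp, Real.exp_le_exp]
  constructor
  · linarith [key.2]
  · linarith [key.1]
end

section
/- Logarithmic derivative identity at fixed φ: let (φ, β₁) ∈ D, let u(t) = U(φ, t) and v(t) = V(φ, t) as functions of the second variable t near β₁, and set X = 3φ − 1, Y = 3φ − β₁, R = (Y/X)·V(φ, β₁) − 1. Then R > 0 and u′(β₁)/u(β₁) − v′(β₁)/v(β₁) = −v′(β₁)/(v(β₁)·(v(β₁) − 1)) · R. -/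
/-- `U(φ, β₁) = 9(1−φ)β₃/(Y β₂)` where `β₂ = 3(1−φ) − 2β₁`, `β₃ = β₁ − 2 + 3φ`,
`Y = 3φ − β₁`. -/
noncomputable def Ufun (φ β₁ : ℝ) : ℝ :=
  9 * (1 - φ) * (β₁ - 2 + 3 * φ) / ((3 * φ - β₁) * (3 * (1 - φ) - 2 * β₁))

/-- `V(φ, β₁) = 1 + β₂²/(3 Y β₃)`. -/
noncomputable def Vfun (φ β₁ : ℝ) : ℝ :=
  1 + (3 * (1 - φ) - 2 * β₁) ^ 2 / (3 * (3 * φ - β₁) * (β₁ - 2 + 3 * φ))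

/-- The constraint polygon `D` for the pair `(φ, β₁)`. -/
def Dset : Set (ℝ × ℝ) :=
  {q | 0.525245 ≤ q.1 ∧ q.1 ≤ 0.619063 ∧ 0.33018 ≤ q.2 ∧ q.2 ≤ 0.52891 ∧
    0.33018 ≤ 3 * (1 - q.1) - 2 * q.2 ∧ 3 * (1 - q.1) - 2 * q.2 ≤ 0.52891 ∧
    0.077639 ≤ q.2 - 2 + 3 * q.1 ∧ q.2 - 2 + 3 * q.1 ≤ 0.21782}

/-- logarithmic derivative identity at fixed `φ`.  For `(φ, β₁) ∈ D`,
with `u(t) = U(φ,t)`, `v(t) = V(φ,t)`, `X = 3φ − 1`, `Y = 3φ − β₁` and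
`R = (Y/X)·V(φ,β₁) − 1`, one has `R > 0` and
`u′/u − v′/v = (−v′/(v(v−1)))·R` at `β₁`. -/
theorem log_deriv_identity_fixed_phi (φ β₁ : ℝ) (hD : (φ, β₁) ∈ Dset) :
    0 < (3 * φ - β₁) / (3 * φ - 1) * Vfun φ β₁ - 1 ∧
      deriv (fun t => Ufun φ t) β₁ / Ufun φ β₁ - deriv (fun t => Vfun φ t) β₁ / Vfun φ β₁ =
        -(deriv (fun t => Vfun φ t) β₁) / (Vfun φ β₁ * (Vfun φ β₁ - 1)) *
          ((3 * φ - β₁) / (3 * φ - 1) * Vfun φ β₁ - 1) := by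
  obtain ⟨h1, h2, h3, h4, h5, h6, h7, h8⟩ := hD
  simp only at h1 h2 h3 h4 h5 h6 h7 h8
  norm_num at h1 h2 h3 h4 h5 h6 h7 h8
  have hY : 0 < 3 * φ - β₁ := by linarith
  have hX : 0 < 3 * φ - 1 := by linarith
  have hb2 : 0 < 3 * (1 - φ) - 2 * β₁ := by linarith
  have hb3 : 0 < β₁ - 2 + 3 * φ := by linarith
  have hp : 0 < 1 - φ := by linarith
  have d3 : HasDerivAt (fun t : ℝ => t - 2 + 3 * φ) 1 β₁ :=
    ((hasDerivAt_id β₁).sub_const 2).add_const (3 * φ)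
  have dY : HasDerivAt (fun t : ℝ => 3 * φ - t) (-1) β₁ :=
    (hasDerivAt_id β₁).const_sub (3 * φ)
  have d2 : HasDerivAt (fun t : ℝ => 3 * (1 - φ) - 2 * t) (-(2 * 1)) β₁ :=
    ((hasDerivAt_id β₁).const_mul 2).const_sub (3 * (1 - φ))
  have dU := ((d3.const_mul (9 * (1 - φ))).fun_div (dY.fun_mul d2) (by positivity)).deriv
  have dV := (((d2.fun_pow 2).fun_div ((dY.const_mul 3).fun_mul d3) (by positivity)).const_add 1).deriv
  have eU : deriv (fun t => Ufun φ t) β₁ / Ufun φ β₁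
      = 1 / (β₁ - 2 + 3 * φ) + 1 / (3 * φ - β₁) + 2 / (3 * (1 - φ) - 2 * β₁) := by
    unfold Ufun
    rw [dU]
    generalize 3 * φ - β₁ = Y at *
    generalize β₁ - 2 + 3 * φ = b3 at *
    generalize 3 * (1 - φ) - 2 * β₁ = b2 at *
    field_simp
    ring
  have eV : deriv (fun t => Vfun φ t) β₁ = -(Vfun φ β₁ - 1) *
      (4 / (3 * (1 - φ) - 2 * β₁) + 1 / (β₁ - 2 + 3 * φ) - 1 / (3 * φ - β₁)) := by
    unfold Vfun
    rw [dV]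
    generalize 3 * φ - β₁ = Y at *
    generalize β₁ - 2 + 3 * φ = b3 at *
    generalize 3 * (1 - φ) - 2 * β₁ = b2 at *
    push_cast
    field_simp
    ring
  have hV : 0 < Vfun φ β₁ - 1 := by
    unfold Vfun
    rw [add_sub_cancel_left]
    positivity
  have key : 1 / (β₁ - 2 + 3 * φ) + 1 / (3 * φ - β₁) + 2 / (3 * (1 - φ) - 2 * β₁) =
      (4 / (3 * (1 - φ) - 2 * β₁) + 1 / (β₁ - 2 + 3 * φ) - 1 / (3 * φ - β₁)) *
        ((3 * φ - β₁) / (3 * φ - 1) - 1) := by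
    have hXe := hX.ne'
    have hYe := hY.ne'
    have h2e := hb2.ne'
    have h3e := hb3.ne'
    rw [div_add_div _ _ h3e hYe, div_add_div _ _ (mul_ne_zero h3e hYe) h2e,
      div_add_div _ _ h2e h3e, div_sub_div _ _ (mul_ne_zero h2e h3e) hYe,
      div_sub_one hXe, div_mul_div_comm, div_eq_div_iff (by positivity) (by positivity)]
    ring
  rw [eU, eV, key]
  generalize Vfun φ β₁ = v at *
  generalize 4 / (3 * (1 - φ) - 2 * β₁) + 1 / (β₁ - 2 + 3 * φ) - 1 / (3 * φ - β₁) = L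
  have hv : 0 < v := by linarith
  constructor
  · have hq : 1 < (3 * φ - β₁) / (3 * φ - 1) := by
      rw [lt_div_iff₀ hX]; linarith
    nlinarith
  · have hw := hV.ne'
    generalize (3 * φ - β₁) / (3 * φ - 1) = q
    field_simp
    ring
end

section
/- Logarithmic derivative bound at fixed β₁: let (φ, β₁) ∈ D, and let u(t) = U(t, β₁) and v(t) = V(t, β₁) as functions of the first variable t near φ. Then v′(φ) < 0, and the real number R := −(v(φ)·(v(φ) − 1))/v′(φ) · (u′(φ)/u(φ) − v′(φ)/v(φ)) satisfies 0 < R < S, where S = ((3φ − β₁)/(1 − β₁))·(V(φ, β₁) − 1) + 1/2. -/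
theorem aux_derivs (φ β b c Y w : ℝ) (hb' : b = 3 * (1 - φ) - 2 * β) (hc' : c = β - 2 + 3 * φ)
    (hY' : Y = 3 * φ - β) (hw' : w = 3 * (1 - φ)) (hb : 0 < b) (hc : 0 < c) (hY : 0 < Y) (hw : 0 < w) :
    deriv (fun t => Vfun t β) φ = -(b ^ 2 / (3 * Y * c)) * (6 / b + 3 / Y + 3 / c) ∧
    deriv (fun t => Ufun t β) φ =
      (3 * w * c / (Y * b)) * (3 / b + 3 / c - 3 / Y - 3 / w) := by
  have d1 : HasDerivAt (fun t : ℝ => 3 * (1 - t) - 2 * β) (-3) φ := by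
    have := ((((hasDerivAt_id φ).const_sub 1).const_mul 3).sub_const (2 * β))
    simpa using this
  have d2 : HasDerivAt (fun t : ℝ => β - 2 + 3 * t) 3 φ := by
    have := (((hasDerivAt_id φ).const_mul 3).const_add (β - 2))
    simpa using this
  have d3 : HasDerivAt (fun t : ℝ => 3 * t - β) 3 φ := by
    have := (((hasDerivAt_id φ).const_mul 3).sub_const β)
    simpa using this
  have d4 : HasDerivAt (fun t : ℝ => 9 * (1 - t)) (-9) φ := by
    have := (((hasDerivAt_id φ).const_sub 1).const_mul 9)
    simpa using this
  have e9 : 9 * (1 - φ) = 3 * w := by rw [hw']; ring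
  constructor
  · have h := (((d1.pow 2).div ((d3.const_mul 3).mul d2)
      (by simp only [Pi.mul_apply]; rw [← hc', ← hY']; positivity)).const_add 1)
    have h2 : deriv (fun t => Vfun t β) φ = _ := h.deriv
    rw [h2]
    simp only [Pi.mul_apply, Pi.pow_apply]
    rw [← hb', ← hc', ← hY']
    field_simp
    ring
  · have h := (d4.mul d2).div (d3.mul d1)
      (by simp only [Pi.mul_apply]; rw [← hb', ← hY']; positivity)
    have h2 : deriv (fun t => Ufun t β) φ = _ := h.deriv
    rw [h2]
    simp only [Pi.mul_apply]
    rw [← hb', ← hc', ← hY', e9]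
    field_simp
    ring

/-- logarithmic derivative bound at fixed `β₁`.  For `(φ, β₁) ∈ D`, with
`u(t) = U(t,β₁)`, `v(t) = V(t,β₁)`, one has `v′(φ) < 0`, and
`R := −(v(v−1))/v′ · (u′/u − v′/v)` (at `φ`) satisfies `0 < R < S` where
`S = ((3φ − β₁)/(1 − β₁))·(V − 1) + 1/2`. -/
theorem log_deriv_bound_fixed_beta (φ β₁ : ℝ) (hD : (φ, β₁) ∈ Dset) :
    deriv (fun t => Vfun t β₁) φ < 0 ∧
      0 < -(Vfun φ β₁ * (Vfun φ β₁ - 1)) / deriv (fun t => Vfun t β₁) φ *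
          (deriv (fun t => Ufun t β₁) φ / Ufun φ β₁ -
            deriv (fun t => Vfun t β₁) φ / Vfun φ β₁) ∧
      -(Vfun φ β₁ * (Vfun φ β₁ - 1)) / deriv (fun t => Vfun t β₁) φ *
          (deriv (fun t => Ufun t β₁) φ / Ufun φ β₁ -
            deriv (fun t => Vfun t β₁) φ / Vfun φ β₁)
        < (3 * φ - β₁) / (1 - β₁) * (Vfun φ β₁ - 1) + 1 / 2 := by
  obtain ⟨h1, h2, h3, h4, h5, h6, h7, h8⟩ := hD
  norm_num only at h1 h2 h3 h4 h5 h6 h7 h8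
  obtain ⟨b, hb'⟩ : ∃ b, b = 3 * (1 - φ) - 2 * β₁ := ⟨_, rfl⟩
  obtain ⟨c, hc'⟩ : ∃ c, c = β₁ - 2 + 3 * φ := ⟨_, rfl⟩
  obtain ⟨Y, hY'⟩ : ∃ Y, Y = 3 * φ - β₁ := ⟨_, rfl⟩
  obtain ⟨w, hw'⟩ : ∃ w, w = 3 * (1 - φ) := ⟨_, rfl⟩
  have hb : 0 < b := by linarith
  have hc : 0 < c := by linarith
  have hY : 0 < Y := by linarith
  have hw : 0 < w := by linarith
  have hbw : b < w := by linarith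
  have hYbc : Y = 2 * b + 3 * c := by linarith
  have hβ : 1 - β₁ = b + c := by linarith
  obtain ⟨hV, hU⟩ := aux_derivs φ β₁ b c Y w hb' hc' hY' hw' hb hc hY hw
  have eV : Vfun φ β₁ = 1 + b ^ 2 / (3 * Y * c) := by
    unfold Vfun; rw [← hb', ← hc', ← hY']
  have eU : Ufun φ β₁ = 3 * w * c / (Y * b) := by
    unfold Ufun; rw [← hb', ← hc', ← hY', hw']; ring
  have hM : 0 < w * (Y * c + Y * b - b * c) - b * c * Y := by
    have : 0 < (w - b) * (Y * c + Y * b - b * c) := by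
      apply mul_pos (by linarith)
      rw [hYbc]; ring_nf; positivity
    have : 0 < b * (Y * b - b * c) := by
      rw [hYbc]; ring_nf; positivity
    linarith
  have hR : -(Vfun φ β₁ * (Vfun φ β₁ - 1)) / deriv (fun t => Vfun t β₁) φ *
          (deriv (fun t => Ufun t β₁) φ / Ufun φ β₁ -
            deriv (fun t => Vfun t β₁) φ / Vfun φ β₁) =
      (1 + b ^ 2 / (3 * Y * c)) * (w * (Y * c + Y * b - b * c) - b * c * Y) /
        (w * (2 * c * Y + b * c + b * Y)) + b ^ 2 / (3 * Y * c) := by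
    rw [hV, hU, eV, eU]
    have hv : 3 * Y * c + b ^ 2 ≠ 0 := by positivity
    have hL : 2 * c * Y + b * c + b * Y ≠ 0 := by positivity
    have hv2 : 1 + b ^ 2 / (3 * Y * c) ≠ 0 := by positivity
    have hL2 : 6 / b + 3 / Y + 3 / c = 3 * (2 * c * Y + b * c + b * Y) / (b * c * Y) := by
      field_simp; ring
    have hM2 : 3 / b + 3 / c - 3 / Y - 3 / w =
        3 * (w * (Y * c + Y * b - b * c) - b * c * Y) / (b * c * Y * w) := by
      field_simp
    rw [hL2, hM2]
    generalize w * (Y * c + Y * b - b * c) - b * c * Y = M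
    generalize 2 * c * Y + b * c + b * Y = L at *
    field_simp
    ring
  refine ⟨?_, ?_, ?_⟩
  · rw [hV, neg_mul]
    exact neg_neg_of_pos (by positivity)
  · rw [hR]
    positivity
  · rw [hR, eV, hβ, ← hY']
    rw [← sub_pos]
    have key : Y / (b + c) * (1 + b ^ 2 / (3 * Y * c) - 1) + 1 / 2 -
        ((1 + b ^ 2 / (3 * Y * c)) * (w * (Y * c + Y * b - b * c) - b * c * Y) /
        (w * (2 * c * Y + b * c + b * Y)) + b ^ 2 / (3 * Y * c)) =
        b * (b + 3 * c) / (6 * w * (b + c)) := by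
      have e : 2 * c * Y + b * c + b * Y = 2 * (b + c) * (b + 3 * c) := by rw [hYbc]; ring
      rw [e]
      field_simp
      rw [hYbc]
      ring
    rw [key]
    positivity
end

section
/- Expression of R as a function of V alone at fixed φ, and concavity: (a) for every (φ, β₁) ∈ D, with V = V(φ, β₁), one has ((3φ − β₁)/(3φ − 1))·V − 1 = (3V² − 1 + 3V·√(V(V−1)))/(3V + 1). (b) The function g defined on (1, ∞) by g(v) = (3v² − 1 + 3v·√(v(v−1)))/(3v + 1) is strictly concave on (1, ∞). -/
/-- First derivative of the function in part (b). -/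
lemma g_hasDerivAt (v : ℝ) (hv : 1 < v) :
    HasDerivAt (fun v : ℝ => (3 * v ^ 2 - 1 + 3 * v * Real.sqrt (v * (v - 1))) / (3 * v + 1))
      (1 + 2 / (3 * v + 1) ^ 2 +
        v * (9 * v ^ 2 + 3 / 2 * v - 9 / 2) / (Real.sqrt (v * (v - 1)) * (3 * v + 1) ^ 2)) v := by
  have hp : 0 < v * (v - 1) := mul_pos (by linarith) (by linarith)
  have h1 : HasDerivAt (fun v : ℝ => v * (v - 1)) (1 * (v - 1) + v * 1) v :=
    (hasDerivAt_id v).mul ((hasDerivAt_id v).sub_const 1)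
  have h2 := h1.sqrt hp.ne'
  have h3 : HasDerivAt (fun v : ℝ => 3 * v) (3 * 1) v := (hasDerivAt_id v).const_mul 3
  have h4 : HasDerivAt (fun v : ℝ => 3 * v ^ 2 - 1) (3 * ((2 : ℕ) * v ^ (2 - 1))) v :=
    ((hasDerivAt_pow 2 v).const_mul 3).sub_const 1
  have h5 := (h4.add (h3.mul h2)).div (h3.add_const 1) (by linarith : 3 * v + 1 ≠ 0)
  refine h5.congr_deriv ?_
  have hr : 0 < Real.sqrt (v * (v - 1)) := Real.sqrt_pos.2 hp
  have hr2 : Real.sqrt (v * (v - 1)) ^ 2 = v * (v - 1) := Real.sq_sqrt hp.le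
  have h6 : 3 * v + 1 ≠ 0 := by linarith
  simp only [Pi.add_apply, Pi.mul_apply]
  generalize Real.sqrt (v * (v - 1)) = r at *
  field_simp
  ring_nf
  simp only [hr2]
  ring

/-- Second derivative of the function in part (b). -/
lemma g_hasDerivAt2 (v : ℝ) (hv : 1 < v) :
    HasDerivAt (fun v : ℝ => 1 + 2 / (3 * v + 1) ^ 2 +
        v * (9 * v ^ 2 + 3 / 2 * v - 9 / 2) / (Real.sqrt (v * (v - 1)) * (3 * v + 1) ^ 2))
      (3 * ((11 / 4 * v ^ 2 - 15 / 2 * v + 3 / 4) - 4 * (v - 1) * Real.sqrt (v * (v - 1)))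
        / ((v - 1) * Real.sqrt (v * (v - 1)) * (3 * v + 1) ^ 3)) v := by
  have hp : 0 < v * (v - 1) := mul_pos (by linarith) (by linarith)
  have hr : 0 < Real.sqrt (v * (v - 1)) := Real.sqrt_pos.2 hp
  have hr2 : Real.sqrt (v * (v - 1)) ^ 2 = v * (v - 1) := Real.sq_sqrt hp.le
  have h6 : 3 * v + 1 ≠ 0 := by linarith
  have h7 : v - 1 ≠ 0 := by linarith
  have h8 : v ≠ 0 := by linarith
  have h1 : HasDerivAt (fun v : ℝ => v * (v - 1)) (1 * (v - 1) + v * 1) v :=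
    (hasDerivAt_id v).mul ((hasDerivAt_id v).sub_const 1)
  have h2 := h1.sqrt hp.ne'
  have h3 : HasDerivAt (fun v : ℝ => 3 * v + 1) (3 * 1) v :=
    ((hasDerivAt_id v).const_mul 3).add_const 1
  have h3' : HasDerivAt (fun v : ℝ => (3 * v + 1) ^ 2) ((2 : ℕ) * (3 * v + 1) ^ (2 - 1) * (3 * 1)) v :=
    h3.pow 2
  have h4 : HasDerivAt (fun v : ℝ => 9 * v ^ 2 + 3 / 2 * v - 9 / 2)
      (9 * ((2 : ℕ) * v ^ (2 - 1)) + 3 / 2 * 1) v :=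
    (((hasDerivAt_pow 2 v).const_mul 9).add ((hasDerivAt_id v).const_mul (3 / 2))).sub_const _
  have h4' : HasDerivAt (fun v : ℝ => v * (9 * v ^ 2 + 3 / 2 * v - 9 / 2)) _ v :=
    (hasDerivAt_id v).mul h4
  have h5 := ((((hasDerivAt_const v (2 : ℝ)).div h3' (pow_ne_zero 2 h6)).const_add 1).add
    (h4'.div (h2.mul h3') (mul_ne_zero hr.ne' (pow_ne_zero 2 h6))))
  refine h5.congr_deriv ?_
  simp only [Pi.mul_apply, id]
  generalize Real.sqrt (v * (v - 1)) = r at *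
  have hr3 : r ^ 3 = r * (v * (v - 1)) := by rw [← hr2]; ring
  field_simp
  ring_nf
  simp only [hr2, hr3]
  ring

/-- (a) for `(φ, β₁) ∈ D` with `V = V(φ, β₁)`,
`((3φ − β₁)/(3φ − 1))·V − 1 = (3V² − 1 + 3V√(V(V−1)))/(3V + 1)`;
(b) `g(v) = (3v² − 1 + 3v√(v(v−1)))/(3v + 1)` is strictly concave on `(1, ∞)`. -/
theorem R_as_function_of_V_fixed_phi_and_concavity :
    (∀ φ β₁ : ℝ, (φ, β₁) ∈ Dset →
        (3 * φ - β₁) / (3 * φ - 1) * Vfun φ β₁ - 1 =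
          (3 * (Vfun φ β₁) ^ 2 - 1 +
              3 * Vfun φ β₁ * Real.sqrt (Vfun φ β₁ * (Vfun φ β₁ - 1))) /
            (3 * Vfun φ β₁ + 1)) ∧
      StrictConcaveOn ℝ (Set.Ioi 1)
        (fun v : ℝ => (3 * v ^ 2 - 1 + 3 * v * Real.sqrt (v * (v - 1))) / (3 * v + 1)) := by
  constructor
  · rintro φ b ⟨h1, h2, h3, h4, h5, h6, h7, h8⟩
    simp only at h1 h2 h3 h4 h5 h6 h7 h8
    norm_num at h1 h2 h3 h4 h5 h6 h7 h8
    have hY : 0 < 3 * φ - b := by linarith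
    have hb2 : 0 < 3 * (1 - φ) - 2 * b := by linarith
    have hb3 : 0 < b - 2 + 3 * φ := by linarith
    have hs : 0 < 6 * φ + b - 3 := by linarith
    have hp : 0 < 3 * φ - 1 := by linarith
    have hV : Vfun φ b = (6 * φ + b - 3) ^ 2 / (3 * (3 * φ - b) * (b - 2 + 3 * φ)) := by
      unfold Vfun
      field_simp
      ring
    have hr : Real.sqrt (Vfun φ b * (Vfun φ b - 1)) =
        (6 * φ + b - 3) * (3 * (1 - φ) - 2 * b) / (3 * (3 * φ - b) * (b - 2 + 3 * φ)) := by
      have hV1 : Vfun φ b - 1 =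
          (3 * (1 - φ) - 2 * b) ^ 2 / (3 * (3 * φ - b) * (b - 2 + 3 * φ)) := by
        unfold Vfun
        ring
      rw [Real.sqrt_eq_iff_mul_self_eq_of_pos (by positivity), hV1, hV]
      rw [div_mul_div_comm, div_mul_div_comm]
      ring
    have hd : 3 * ((6 * φ + b - 3) ^ 2 / (3 * (3 * φ - b) * (b - 2 + 3 * φ))) + 1 ≠ 0 := by
      positivity
    have hd2 : (6 * φ + b - 3) ^ 2 + (3 * φ - b) * (b - 2 + 3 * φ) ≠ 0 := by
      positivity
    rw [hr, hV, eq_div_iff hd]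
    field_simp
    ring
  · apply strictConcaveOn_of_deriv2_neg' (convex_Ioi 1)
    · intro v hv
      exact (g_hasDerivAt v hv).continuousAt.continuousWithinAt
    · intro v hv
      have hv' : 1 < v := hv
      have he : deriv (fun v : ℝ => (3 * v ^ 2 - 1 + 3 * v * Real.sqrt (v * (v - 1))) / (3 * v + 1))
          =ᶠ[nhds v] (fun v : ℝ => 1 + 2 / (3 * v + 1) ^ 2 +
        v * (9 * v ^ 2 + 3 / 2 * v - 9 / 2) / (Real.sqrt (v * (v - 1)) * (3 * v + 1) ^ 2)) := by
        filter_upwards [Ioi_mem_nhds hv'] with w hw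
        exact (g_hasDerivAt w hw).deriv
      simp only [Function.iterate_succ, Function.iterate_zero, Function.comp, id]
      rw [he.deriv_eq, (g_hasDerivAt2 v hv').deriv]
      have hp : 0 < v * (v - 1) := mul_pos (by linarith) (by linarith)
      have hr : 0 < Real.sqrt (v * (v - 1)) := Real.sqrt_pos.2 hp
      have hle : v - 1 ≤ Real.sqrt (v * (v - 1)) := Real.le_sqrt_of_sq_le (by nlinarith)
      have h7 : 0 < v - 1 := by linarith
      have h6 : 0 < 3 * v + 1 := by linarith
      apply div_neg_of_neg_of_pos
      · nlinarith [mul_le_mul_of_nonneg_left hle h7.le, sq_nonneg (v - 1)]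
      · positivity
end

section
/- Affine upper bound for the fixed-φ function of V: for every real v ≥ 1.126983, one has (3v² − 1 + 3v·√(v(v−1)))/(3v + 1) ≤ 2.4427·v − 1.8194. -/
/-- affine upper bound for the fixed-`φ` function of `V`: for every real
`v ≥ 1.126983`, `(3v² − 1 + 3v√(v(v−1)))/(3v + 1) ≤ 2.4427 v − 1.8194`. -/
theorem affine_bound_fixed_phi (v : ℝ) (hv : 1.126983 ≤ v) :
    (3 * v ^ 2 - 1 + 3 * v * Real.sqrt (v * (v - 1))) / (3 * v + 1) ≤
      2.4427 * v - 1.8194 := by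
  obtain ⟨w, hw, rfl⟩ : ∃ w : ℝ, 0 ≤ w ∧ v = w + 1.126983 := ⟨v - 1.126983, by linarith, by ring⟩
  have hpos : (0 : ℝ) < 3 * (w + 1.126983) + 1 := by positivity
  have hQ : 0 ≤ (2.4427 * (w + 1.126983) - 1.8194) * (3 * (w + 1.126983) + 1)
      - 3 * (w + 1.126983) ^ 2 + 1 := by nlinarith [sq_nonneg w]
  have hv3 : (0 : ℝ) < 3 * (w + 1.126983) := by positivity
  have key : Real.sqrt ((w + 1.126983) * (w + 1.126983 - 1)) ≤
      ((2.4427 * (w + 1.126983) - 1.8194) * (3 * (w + 1.126983) + 1)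
      - 3 * (w + 1.126983) ^ 2 + 1) / (3 * (w + 1.126983)) := by
    apply Real.sqrt_le_iff.mpr
    refine ⟨div_nonneg hQ hv3.le, ?_⟩
    rw [div_pow, le_div_iff₀ (by positivity)]
    rw [← sub_nonneg]
    ring_nf
    positivity
  rw [le_div_iff₀ hv3] at key
  rw [div_le_iff₀ hpos]
  linarith
end

section
/- Expression of S as a function of V alone at fixed β₁, and concavity: (a) for every (φ, β₁) ∈ D with V = V(φ, β₁) ≠ 4/3, one has ((3φ − β₁)/(1 − β₁))·(V − 1) + 1/2 = 1/2 + 3(V − 1)·(V − 2 + √(V(V−1)))/(3V − 4). (b) The function h defined on (1, ∞) by h(v) = 1/2 + 3(v − 1)·(v − 2 + √(v(v−1)))/(3v − 4) for v ≠ 4/3, and extended by continuity at v = 4/3 (the limit exists there), is strictly concave on (1, ∞). -/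
/-- The closed form of `h` without a removable singularity. -/
noncomputable def hfun (v : ℝ) : ℝ :=
  1 / 2 + 3 * (v - 1) / (2 - v + Real.sqrt (v * (v - 1)))

lemma hfun_den_pos {v : ℝ} (hv : 1 < v) : 0 < 2 - v + Real.sqrt (v * (v - 1)) := by
  have h : v - 1 ≤ Real.sqrt (v * (v - 1)) := by
    apply Real.le_sqrt_of_sq_le
    nlinarith
  linarith

lemma hfun_param {v : ℝ} (hv : 1 < v) :
    ∃ p : ℝ, 0 < p ∧ v = 1 + 1 / (p * (p + 2)) ∧ hfun v = 1 / 2 + 3 / (p * (p + 3)) := by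
  have hv1 : 0 < v - 1 := by linarith
  have h1 : 1 < v / (v - 1) := by
    rw [lt_div_iff₀ hv1]; linarith
  have hr : 1 < Real.sqrt (v / (v - 1)) := by
    rw [Real.lt_sqrt (by norm_num)]; simpa using h1
  have hsq : Real.sqrt (v / (v - 1)) ^ 2 = v / (v - 1) := Real.sq_sqrt (by linarith)
  obtain ⟨p, hp⟩ : ∃ p, p = Real.sqrt (v / (v - 1)) - 1 := ⟨_, rfl⟩
  have hp0 : 0 < p := by linarith
  have hp2 : (p + 1) ^ 2 = v / (v - 1) := by rw [← hsq, hp]; ring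
  have hveq : v = 1 + 1 / (p * (p + 2)) := by
    rw [eq_div_iff hv1.ne'] at hp2
    have : p * (p + 2) ≠ 0 := by positivity
    field_simp
    nlinarith
  refine ⟨p, hp0, hveq, ?_⟩
  have hs : Real.sqrt (v * (v - 1)) = (p + 1) / (p * (p + 2)) := by
    rw [Real.sqrt_eq_iff_mul_self_eq (by positivity) (by positivity), hveq]
    field_simp
    ring
  have hd := hfun_den_pos hv
  unfold hfun
  rw [hs] at hd ⊢
  have e : 2 - v + (p + 1) / (p * (p + 2)) = (p + 3) / (p + 2) := by
    rw [hveq]; field_simp; ring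
  rw [e, hveq]
  field_simp
  ring

/-- Strict tangent-line inequality. -/
lemma hfun_tangent {w : ℝ} (hw : 1 < w) :
    ∃ m : ℝ, ∀ v : ℝ, 1 < v → v ≠ w → hfun v < hfun w + m * (v - w) := by
  obtain ⟨p, hp, hwp, hhw⟩ := hfun_param hw
  refine ⟨3 * (2 * p + 3) * (p + 2) ^ 2 / (2 * (1 + p) * (p + 3) ^ 2), fun v hv hne => ?_⟩
  obtain ⟨q, hq, hvq, hhv⟩ := hfun_param hv
  have hpq : p - q ≠ 0 := by
    intro h
    apply hne
    rw [hvq, hwp, sub_eq_zero.mp h]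
  have key : hfun w + 3 * (2 * p + 3) * (p + 2) ^ 2 / (2 * (1 + p) * (p + 3) ^ 2) * (v - w)
      - hfun v = 3 * (p - q) ^ 2 * (2 * p + q + 5) /
        (2 * q * (p + 3) ^ 2 * (1 + p) * (q + 2) * (q + 3)) := by
    rw [hhv, hhw, hvq, hwp]
    field_simp
    ring
  have : 0 < 3 * (p - q) ^ 2 * (2 * p + q + 5) /
        (2 * q * (p + 3) ^ 2 * (1 + p) * (q + 2) * (q + 3)) := by positivity
  linarith

lemma hfun_strictConcave : StrictConcaveOn ℝ (Set.Ioi 1) hfun := by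
  refine ⟨convex_Ioi 1, ?_⟩
  intro x hx y hy hxy a b ha hb hab
  simp only [smul_eq_mul]
  have hx' : 1 < x := hx
  have hy' : 1 < y := hy
  have hz : 1 < a * x + b * y := by nlinarith
  obtain ⟨m, hm⟩ := hfun_tangent hz
  have hb' : b = 1 - a := by linarith
  have nx : x ≠ a * x + b * y := by
    intro h
    have : b * (x - y) = 0 := by rw [hb'] at h ⊢; linarith
    rcases mul_eq_zero.mp this with h | h
    · exact hb.ne' h
    · exact hxy (sub_eq_zero.mp h)
  have ny : y ≠ a * x + b * y := by
    intro h
    have : a * (x - y) = 0 := by rw [hb'] at h; linarith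
    rcases mul_eq_zero.mp this with h | h
    · exact ha.ne' h
    · exact hxy (sub_eq_zero.mp h)
  have t1 := mul_lt_mul_of_pos_left (hm x hx' nx) ha
  have t2 := mul_lt_mul_of_pos_left (hm y hy' ny) hb
  have e : a * (hfun (a * x + b * y) + m * (x - (a * x + b * y))) +
      b * (hfun (a * x + b * y) + m * (y - (a * x + b * y))) = hfun (a * x + b * y) := by
    generalize hfun (a * x + b * y) = k
    rw [hb']; ring
  linarith

lemma hfun_eq {v : ℝ} (hv : 1 < v) (hne : v ≠ 4 / 3) :
    hfun v = 1 / 2 + 3 * (v - 1) * (v - 2 + Real.sqrt (v * (v - 1))) / (3 * v - 4) := by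
  have hd := hfun_den_pos hv
  have hs : Real.sqrt (v * (v - 1)) ^ 2 = v * (v - 1) := Real.sq_sqrt (by nlinarith)
  have h3 : 3 * v - 4 ≠ 0 := fun h => hne (by linarith)
  unfold hfun
  generalize Real.sqrt (v * (v - 1)) = s at *
  congr 1
  rw [div_eq_div_iff hd.ne' h3]
  linear_combination (-3 * (v - 1)) * hs

lemma hfun_continuousAt : ContinuousAt hfun (4 / 3) := by
  have hd := hfun_den_pos (v := 4 / 3) (by norm_num)
  unfold hfun
  exact ContinuousAt.add (by fun_prop) (ContinuousAt.div (by fun_prop) (by fun_prop) hd.ne')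

lemma part_a (φ β : ℝ) (hD : (φ, β) ∈ Dset) :
    1 < Vfun φ β ∧ (3 * φ - β) / (1 - β) * (Vfun φ β - 1) + 1 / 2 = hfun (Vfun φ β) := by
  obtain ⟨h1, h2, h3, h4, h5, h6, h7, h8⟩ := hD
  simp only at h1 h2 h3 h4 h5 h6 h7 h8
  norm_num at h1 h2 h3 h4 h5 h6 h7 h8
  obtain ⟨b₂, hb₂⟩ : ∃ b₂, b₂ = 3 * (1 - φ) - 2 * β := ⟨_, rfl⟩
  obtain ⟨b₃, hb₃⟩ : ∃ b₃, b₃ = β - 2 + 3 * φ := ⟨_, rfl⟩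
  have p2 : 0 < b₂ := by linarith
  have p3 : 0 < b₃ := by linarith
  have ea : 1 - β = b₂ + b₃ := by rw [hb₂, hb₃]; ring
  have eY : 3 * φ - β = 2 * b₂ + 3 * b₃ := by rw [hb₂, hb₃]; ring
  have hV : Vfun φ β = 1 + b₂ ^ 2 / (3 * (2 * b₂ + 3 * b₃) * b₃) := by
    unfold Vfun; rw [← hb₂, ← hb₃, eY]
  have hV1 : 1 < Vfun φ β := by
    rw [hV]
    have : 0 < b₂ ^ 2 / (3 * (2 * b₂ + 3 * b₃) * b₃) := by positivity
    linarith
  refine ⟨hV1, ?_⟩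
  have hs : Real.sqrt (Vfun φ β * (Vfun φ β - 1)) =
      b₂ * (b₂ + 3 * b₃) / (3 * (2 * b₂ + 3 * b₃) * b₃) := by
    rw [Real.sqrt_eq_iff_mul_self_eq (by nlinarith) (by positivity), hV]
    field_simp
    ring
  unfold hfun
  have e : 2 - Vfun φ β + Real.sqrt (Vfun φ β * (Vfun φ β - 1)) =
      3 * (b₂ + b₃) / (2 * b₂ + 3 * b₃) := by
    rw [hs, hV]; field_simp; ring
  rw [e, ea, eY, hV]
  field_simp
  ring

/-- (a) for `(φ, β₁) ∈ D` with `V = V(φ, β₁) ≠ 4/3`,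
`((3φ − β₁)/(1 − β₁))·(V − 1) + 1/2 = 1/2 + 3(V − 1)(V − 2 + √(V(V−1)))/(3V − 4)`;
(b) the function `h(v) = 1/2 + 3(v − 1)(v − 2 + √(v(v−1)))/(3v − 4)` for `v ≠ 4/3`,
extended by continuity at `v = 4/3` (the limit exists there), is strictly concave on
`(1, ∞)`. -/
theorem S_as_function_of_V_fixed_beta_and_concavity :
    (∀ φ β₁ : ℝ, (φ, β₁) ∈ Dset → Vfun φ β₁ ≠ 4 / 3 →
        (3 * φ - β₁) / (1 - β₁) * (Vfun φ β₁ - 1) + 1 / 2 =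
          1 / 2 + 3 * (Vfun φ β₁ - 1) *
              (Vfun φ β₁ - 2 + Real.sqrt (Vfun φ β₁ * (Vfun φ β₁ - 1))) /
            (3 * Vfun φ β₁ - 4)) ∧
      ∃ h : ℝ → ℝ,
        (∀ v : ℝ, 1 < v → v ≠ 4 / 3 →
            h v = 1 / 2 + 3 * (v - 1) * (v - 2 + Real.sqrt (v * (v - 1))) / (3 * v - 4)) ∧
          ContinuousAt h (4 / 3) ∧ StrictConcaveOn ℝ (Set.Ioi 1) h := by
  refine ⟨fun φ β hD hne => ?_, hfun, fun v hv hne => hfun_eq hv hne, hfun_continuousAt,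
    hfun_strictConcave⟩
  obtain ⟨hV, h⟩ := part_a φ β hD
  rw [h, hfun_eq hV hne]
end

section
/- Affine upper bound for the fixed-β₁ function of V: let h be the function defined on (1, ∞) by h(v) = 1/2 + 3(v − 1)·(v − 2 + √(v(v−1)))/(3v − 4) for v ≠ 4/3, extended by continuity at v = 4/3. Then for every real v ≥ 1.126983, h(v) ≤ 2.2377·v − 1.7173. -/
lemma aux_bound (v : ℝ) (hv : 1 < v) (hne : v ≠ 4 / 3) :
    1 / 2 + 3 * (v - 1) * (v - 2 + Real.sqrt (v * (v - 1))) / (3 * v - 4)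
      ≤ 2.2377 * v - 1.7173 := by
  obtain ⟨s, hs⟩ : ∃ s, s = Real.sqrt (v * (v - 1)) := ⟨_, rfl⟩
  have hs0 : 0 ≤ s := hs ▸ Real.sqrt_nonneg _
  have hs2 : s ^ 2 = v * (v - 1) := by
    rw [hs, Real.sq_sqrt]; nlinarith
  rw [← hs]
  have hsv : s < v := by nlinarith
  have hpos : 0 < s + 2 - v := by
    by_contra hcon
    push Not at hcon
    nlinarith
  have hd : 3 * v - 4 ≠ 0 := fun h => hne (by linarith)
  have e : 3 * (v - 1) * (v - 2 + s) / (3 * v - 4) = 3 * (v - 1) / (s + 2 - v) := by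
    rw [div_eq_div_iff hd hpos.ne']
    linear_combination 3 * (v - 1) * hs2
  rw [e]
  have key : 3 * (v - 1) / (s + 2 - v) ≤ 2.2377 * v - 2.2173 := by
    rw [div_le_iff₀ hpos]
    obtain ⟨t, ht⟩ : ∃ t, t = s / v := ⟨_, rfl⟩
    have hv0 : 0 < v := by linarith
    have ht0 : 0 ≤ t := ht ▸ div_nonneg hs0 hv0.le
    have hst : s = t * v := by rw [ht]; field_simp
    have ht1 : t < 1 := by rw [ht, div_lt_one hv0]; exact hsv
    have hvt : v * (1 - t ^ 2) = 1 := by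
      rw [hst] at hs2
      have : v * (v * (1 - t ^ 2)) = v * 1 := by linear_combination -hs2
      exact mul_left_cancel₀ hv0.ne' this
    have hp : 0 ≤ 1.4346 * t ^ 3 - 0.7827 * t ^ 2 + 0.0408 * t + 0.0204 := by
      nlinarith [mul_nonneg ht0 (sq_nonneg (t - 0.3355)), sq_nonneg (t - 0.3355)]
    have h1t : 0 < 1 - t ^ 2 := by nlinarith
    have hve : v = 1 / (1 - t ^ 2) := by field_simp; linarith
    have hid : (2.2377 * v - 2.2173) * (s + 2 - v) - 3 * (v - 1)
        = (1.4346 * t ^ 3 - 0.7827 * t ^ 2 + 0.0408 * t + 0.0204) * ((1 - t) * v ^ 2) := by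
      rw [hst, hve]
      field_simp
      ring
    have : 0 ≤ (1.4346 * t ^ 3 - 0.7827 * t ^ 2 + 0.0408 * t + 0.0204) * ((1 - t) * v ^ 2) :=
      mul_nonneg hp (mul_nonneg (by linarith) (sq_nonneg v))
    linarith
  linarith

/-- affine upper bound for the fixed-`β₁` function of `V`.  Let `h` be
the function given by `h(v) = 1/2 + 3(v − 1)(v − 2 + √(v(v−1)))/(3v − 4)` for
`v ≠ 4/3`, extended by continuity at `v = 4/3`.  Then for every `v ≥ 1.126983`,
`h(v) ≤ 2.2377 v − 1.7173`. -/
theorem affine_bound_fixed_beta (h : ℝ → ℝ)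
    (hspec : ∀ v : ℝ, 1 < v → v ≠ 4 / 3 →
      h v = 1 / 2 + 3 * (v - 1) * (v - 2 + Real.sqrt (v * (v - 1))) / (3 * v - 4))
    (hcont : ContinuousAt h (4 / 3)) :
    ∀ v : ℝ, 1.126983 ≤ v → h v ≤ 2.2377 * v - 1.7173 := by
  intro v hv
  have hv1 : 1 < v := by norm_num at hv ⊢; linarith
  by_cases hne : v = 4 / 3
  · subst hne
    have h1 : Filter.Tendsto h (nhdsWithin (4 / 3) {(4 / 3 : ℝ)}ᶜ) (nhds (h (4 / 3))) :=
      hcont.tendsto.mono_left nhdsWithin_le_nhds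
    have hc : Continuous (fun x : ℝ => 2.2377 * x - 1.7173) := by fun_prop
    have h2 : Filter.Tendsto (fun x : ℝ => 2.2377 * x - 1.7173)
        (nhdsWithin (4 / 3) {(4 / 3 : ℝ)}ᶜ) (nhds (2.2377 * (4 / 3) - 1.7173)) :=
      (hc.tendsto (4 / 3)).mono_left nhdsWithin_le_nhds
    refine le_of_tendsto_of_tendsto h1 h2 ?_
    filter_upwards [self_mem_nhdsWithin,
      mem_nhdsWithin_of_mem_nhds (Ioi_mem_nhds hv1)] with x hx hx1
    rw [hspec x hx1 hx]
    exact aux_bound x hx1 hx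
  · rw [hspec v hv1 hne]
    exact aux_bound v hv1 hne
end

section
/- Bounds on V and U/V over the constraint polygon: for every (φ, β₁) ∈ D, one has V(φ, β₁) ≥ 1 + (0.33018)²/(3·0.21782·(2·0.33018 + 3·0.21782)) (= 1.126983…), and U(φ, β₁)/V(φ, β₁) ≤ 9·(2·(1 − 0.21782) − 0.33018)·(0.21782)²/(0.33018·(0.33018 + 3·0.21782)²) (= 1.64966…). -/
/-- bounds on `V` and `U/V` over the constraint polygon `D`:
`V ≥ 1 + 0.33018²/(3·0.21782·(2·0.33018 + 3·0.21782))` and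
`U/V ≤ 9(2(1 − 0.21782) − 0.33018)·0.21782²/(0.33018·(0.33018 + 3·0.21782)²)`. -/
theorem V_and_UoverV_bounds (φ β₁ : ℝ) (hD : (φ, β₁) ∈ Dset) :
    1 + 0.33018 ^ 2 / (3 * 0.21782 * (2 * 0.33018 + 3 * 0.21782)) ≤ Vfun φ β₁ ∧
      Ufun φ β₁ / Vfun φ β₁ ≤
        9 * (2 * (1 - 0.21782) - 0.33018) * 0.21782 ^ 2 /
          (0.33018 * (0.33018 + 3 * 0.21782) ^ 2) := by
  obtain ⟨-, -, -, -, hb, -, hc, hd⟩ := hD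
  simp only at hb hc hd
  unfold Ufun Vfun
  obtain ⟨b, hbe⟩ : ∃ b, b = 3 * (1 - φ) - 2 * β₁ := ⟨_, rfl⟩
  obtain ⟨c, hce⟩ : ∃ c, c = β₁ - 2 + 3 * φ := ⟨_, rfl⟩
  have hY : 3 * φ - β₁ = 2 * b + 3 * c := by rw [hbe, hce]; ring
  have hP : 9 * (1 - φ) = 3 * (2 - b - 2 * c) := by rw [hbe, hce]; ring
  rw [hY, hP, ← hbe, ← hce]
  rw [← hbe] at hb
  rw [← hce] at hc hd
  clear hbe hce hY hP
  have hb0 : 0 < b := by norm_num at *; linarith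
  have hc0 : 0 < c := by norm_num at *; linarith
  constructor
  · have h1 : (0.33018 : ℝ) * c ≤ b * 0.21782 :=
      mul_le_mul hb hd hc0.le hb0.le
    have h2 : ((0.33018 : ℝ) * c) ^ 2 ≤ (b * 0.21782) ^ 2 :=
      pow_le_pow_left₀ (by positivity) h1 2
    have h3 : (0.33018 * b) * ((0.33018 : ℝ) * c) ≤ (0.33018 * b) * (b * 0.21782) :=
      mul_le_mul_of_nonneg_left h1 (by positivity)
    refine add_le_add_right ?_ 1
    rw [div_le_div_iff₀ (by norm_num) (by positivity)]
    nlinarith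
  · have hU : 3 * (2 - b - 2 * c) * c / ((2 * b + 3 * c) * b) /
        (1 + b ^ 2 / (3 * (2 * b + 3 * c) * c)) =
        9 * (2 - b - 2 * c) * c ^ 2 / (b * (b + 3 * c) ^ 2) := by
      have e : 1 + b ^ 2 / (3 * (2 * b + 3 * c) * c) =
          (b + 3 * c) ^ 2 / (3 * (2 * b + 3 * c) * c) := by
        field_simp
        ring
      rw [e]
      field_simp
      ring
    rw [hU]
    have hs1 : 9 * (2 - b - 2 * c) * c ^ 2 / (b * (b + 3 * c) ^ 2) ≤
        9 * (2 - 0.33018 - 2 * c) * c ^ 2 / (0.33018 * (0.33018 + 3 * c) ^ 2) := by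
      have hn : 0 ≤ 2 - 0.33018 - 2 * c := by norm_num at *; linarith
      gcongr
    refine hs1.trans ?_
    rw [div_le_div_iff₀ (by positivity) (by norm_num)]
    have hx : 0 ≤ 0.21782 - c := by linarith
    have h1 := mul_nonneg hx hc0.le
    have h2 := mul_nonneg hx h1
    have h3 := mul_nonneg h1 hc0.le
    norm_num at *
    nlinarith
end

section
/- Monotonicity of E_{x,p} in β₁ at fixed φ: fix φ ∈ [0.525245, 0.619063], and for integers p ≥ 1 and x ≥ 2p define E_{x,p}(β₁) = (U/V)^{x−2p}·(1 − V^{−p}) with U = U(φ, β₁), V = V(φ, β₁), on the interval I_φ = (2 − 3φ, 3(1 − φ)/2) of β₁ for which β₃ > 0 and β₂ > 0. Then: (i) for all integers p ≥ 1 and x ≥ 2p + 2, E_{x,p} is strictly increasing on I_φ; (ii) setting β₁* = √3 − 3(√3 − 1)·φ, the function E_{3,1}(β₁) = 27(1 − φ)·β₂·β₃²/(β₁ + 6φ − 3)⁴ is strictly increasing on I_φ ∩ (−∞, β₁*] and strictly decreasing on I_φ ∩ [β₁*, +∞); consequently, for all p ≥ 1 and x = 2p + 1, E_{x,p} is strictly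 increasing on I_φ ∩ (−∞, β₁*]. -/
/-- The quartic `v²(1−v)(1−3v)` governing `E_{3,1}` in the coordinate `v = β₃/(β₁+6φ−3)`. -/
noncomputable def gaux (v : ℝ) : ℝ := v ^ 2 * (1 - v) * (1 - 3 * v)

lemma gaux_deriv (v : ℝ) : HasDerivAt gaux (2 * v * (1 - 6 * v + 6 * v ^ 2)) v := by
  have h := ((hasDerivAt_pow 2 v).mul ((hasDerivAt_id v).const_sub 1)).mul
    (((hasDerivAt_id v).const_mul 3).const_sub 1)
  refine (h.congr_deriv ?_)
  simp
  ring

lemma gaux_cont : Continuous gaux := by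
  unfold gaux
  fun_prop

lemma gaux_mono : StrictMonoOn gaux (Set.Icc 0 ((3 - Real.sqrt 3) / 6)) := by
  apply strictMonoOn_of_deriv_pos (convex_Icc _ _) gaux_cont.continuousOn
  intro v hv
  rw [interior_Icc] at hv
  rw [(gaux_deriv v).deriv]
  have h3 : Real.sqrt 3 ^ 2 = 3 := Real.sq_sqrt (by norm_num)
  have h0 : 0 < Real.sqrt 3 := Real.sqrt_pos.2 (by norm_num)
  have h1 := hv.1
  have h2 := hv.2
  have : 0 < 1 - 6 * v + 6 * v ^ 2 := by
    have h4 : Real.sqrt 3 < 3 - 6 * v := by linarith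
    nlinarith [mul_pos (sub_pos.2 h4) h0, mul_pos (sub_pos.2 h4) (sub_pos.2 h4)]
  positivity

lemma gaux_anti : StrictAntiOn gaux (Set.Icc ((3 - Real.sqrt 3) / 6) (1 / 3)) := by
  apply strictAntiOn_of_deriv_neg (convex_Icc _ _) gaux_cont.continuousOn
  intro v hv
  rw [interior_Icc] at hv
  rw [(gaux_deriv v).deriv]
  have h3 : Real.sqrt 3 ^ 2 = 3 := Real.sq_sqrt (by norm_num)
  have h0 : 0 < Real.sqrt 3 := Real.sqrt_pos.2 (by norm_num)
  have h1 := hv.1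
  have h2 := hv.2
  have hs : Real.sqrt 3 < 3 := by nlinarith
  have hv0 : 0 < v := by linarith
  have : 1 - 6 * v + 6 * v ^ 2 < 0 := by
    have h4 : 3 - 6 * v < Real.sqrt 3 := by linarith
    have h5 : 0 < 3 - 6 * v := by linarith
    nlinarith [mul_pos (sub_pos.2 h4) h0, mul_pos (sub_pos.2 h4) h5]
  nlinarith [mul_pos hv0 (neg_pos.2 this)]

/-- The coordinate `v = β₃/(β₁+6φ−3)`. -/
noncomputable def vco (φ t : ℝ) : ℝ := (t - 2 + 3 * φ) / (t + 6 * φ - 3)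

lemma vco_lt {φ a b : ℝ} (hφ : 0.525245 ≤ φ) (ha : 2 - 3 * φ < a) (hab : a < b) :
    vco φ a < vco φ b := by
  unfold vco
  rw [div_lt_div_iff₀ (by norm_num at hφ; linarith) (by norm_num at hφ; linarith)]
  have h : 0 < 3 * φ - 1 := by norm_num at hφ; linarith
  nlinarith [mul_pos h (sub_pos.2 hab)]

lemma vco_pos {φ a : ℝ} (hφ : 0.525245 ≤ φ) (ha : 2 - 3 * φ < a) : 0 < vco φ a := by
  unfold vco
  apply div_pos <;> norm_num at hφ <;> linarith

lemma vco_lt_third {φ a : ℝ} (hφ : 0.525245 ≤ φ) (ha : 2 - 3 * φ < a)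
    (hb : a < 3 * (1 - φ) / 2) : vco φ a < 1 / 3 := by
  unfold vco
  rw [div_lt_iff₀ (by norm_num at hφ; linarith)]
  linarith

lemma vco_star {φ : ℝ} (hφ : 0.525245 ≤ φ) :
    vco φ (Real.sqrt 3 - 3 * (Real.sqrt 3 - 1) * φ) = (3 - Real.sqrt 3) / 6 := by
  have h3 : Real.sqrt 3 ^ 2 = 3 := Real.sq_sqrt (by norm_num)
  have h0 : 0 < Real.sqrt 3 := Real.sqrt_pos.2 (by norm_num)
  have hs : Real.sqrt 3 < 3 := by nlinarith
  have h : 0 < 3 * φ - 1 := by norm_num at hφ; linarith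
  have hW : Real.sqrt 3 - 3 * (Real.sqrt 3 - 1) * φ + 6 * φ - 3
      = (3 * φ - 1) * (3 - Real.sqrt 3) := by ring
  have : (3 * φ - 1) * (3 - Real.sqrt 3) ≠ 0 := (mul_pos h (by linarith)).ne'
  unfold vco
  rw [hW, div_eq_iff this]
  linear_combination (-(3 * φ - 1) / 6) * h3

lemma star_gt {φ : ℝ} (hφ : 0.525245 ≤ φ) :
    2 - 3 * φ < Real.sqrt 3 - 3 * (Real.sqrt 3 - 1) * φ := by
  have h3 : Real.sqrt 3 ^ 2 = 3 := Real.sq_sqrt (by norm_num)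
  have h0 : 0 < Real.sqrt 3 := Real.sqrt_pos.2 (by norm_num)
  have hs : Real.sqrt 3 < 2 := by nlinarith
  have h : 0 < 3 * φ - 1 := by norm_num at hφ; linarith
  nlinarith [mul_pos h (sub_pos.2 hs)]

lemma vco_le {φ a b : ℝ} (hφ : 0.525245 ≤ φ) (ha : 2 - 3 * φ < a) (hab : a ≤ b) :
    vco φ a ≤ vco φ b := by
  rcases hab.eq_or_lt with h | h
  · rw [h]
  · exact (vco_lt hφ ha h).le

lemma one_sub_vco {φ t : ℝ} (hW : t + 6 * φ - 3 ≠ 0) :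
    1 - vco φ t = (3 * φ - 1) / (t + 6 * φ - 3) := by
  unfold vco
  rw [eq_div_iff hW, sub_mul, div_mul_cancel₀ _ hW]
  ring

lemma one_sub_three_vco {φ t : ℝ} (hW : t + 6 * φ - 3 ≠ 0) :
    1 - 3 * vco φ t = (3 * (1 - φ) - 2 * t) / (t + 6 * φ - 3) := by
  unfold vco
  rw [eq_div_iff hW, sub_mul, mul_assoc, div_mul_cancel₀ _ hW]
  ring

lemma E31_eq {φ t : ℝ} (hφ : 0.525245 ≤ φ) (ha : 2 - 3 * φ < t) :
    27 * (1 - φ) * (3 * (1 - φ) - 2 * t) * (t - 2 + 3 * φ) ^ 2 / (t + 6 * φ - 3) ^ 4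
      = 27 * (1 - φ) / (3 * φ - 1) * gaux (vco φ t) := by
  have h : 3 * φ - 1 ≠ 0 := by norm_num at hφ; linarith
  have hW : t + 6 * φ - 3 ≠ 0 := by norm_num at hφ; linarith
  unfold gaux
  rw [one_sub_vco hW, one_sub_three_vco hW]
  unfold vco
  generalize t + 6 * φ - 3 = W at *
  generalize 3 * φ - 1 = s at *
  generalize t - 2 + 3 * φ = c at *
  generalize 3 * (1 - φ) - 2 * t = b at *
  field_simp

lemma Vfun_eq {φ t : ℝ} (hY : 3 * φ - t ≠ 0) (hc : t - 2 + 3 * φ ≠ 0) :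
    Vfun φ t = (t + 6 * φ - 3) ^ 2 / (3 * (3 * φ - t) * (t - 2 + 3 * φ)) := by
  unfold Vfun
  have h : 3 * (3 * φ - t) * (t - 2 + 3 * φ) ≠ 0 :=
    mul_ne_zero (mul_ne_zero (by norm_num) hY) hc
  rw [eq_div_iff h, add_mul, div_mul_cancel₀ _ h]
  ring

lemma UV_eq {φ t : ℝ} (hφ : 0.525245 ≤ φ) (hφ2 : φ ≤ 0.619063) (ha : 2 - 3 * φ < t)
    (hb : t < 3 * (1 - φ) / 2) :
    Ufun φ t / Vfun φ t = 27 * (1 - φ) / (3 * φ - 1) *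
      (vco φ t ^ 2 * (1 - vco φ t) / (1 - 3 * vco φ t)) := by
  norm_num at hφ hφ2
  have h : 3 * φ - 1 ≠ 0 := by linarith
  have hW : t + 6 * φ - 3 ≠ 0 := by linarith
  have hc : t - 2 + 3 * φ ≠ 0 := by linarith
  have hb' : 3 * (1 - φ) - 2 * t ≠ 0 := by linarith
  have hY : 3 * φ - t ≠ 0 := by linarith
  rw [Vfun_eq hY hc, one_sub_vco hW, one_sub_three_vco hW]
  unfold Ufun vco
  clear ha hb
  generalize t + 6 * φ - 3 = W at *
  generalize 3 * φ - 1 = s at *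
  generalize t - 2 + 3 * φ = c at *
  generalize 3 * (1 - φ) - 2 * t = b at *
  generalize 3 * φ - t = Y at *
  field_simp
  ring

lemma Vinv_eq {φ t : ℝ} (hφ : 0.525245 ≤ φ) (hφ2 : φ ≤ 0.619063) (ha : 2 - 3 * φ < t)
    (hb : t < 3 * (1 - φ) / 2) :
    (Vfun φ t)⁻¹ = 1 - (1 - 3 * vco φ t) ^ 2 := by
  norm_num at hφ hφ2
  have hW : t + 6 * φ - 3 ≠ 0 := by linarith
  have hc : t - 2 + 3 * φ ≠ 0 := by linarith
  have hY : 3 * φ - t ≠ 0 := by linarith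
  have hW2 : (t + 6 * φ - 3) ^ 2 ≠ 0 := pow_ne_zero 2 hW
  rw [Vfun_eq hY hc, one_sub_three_vco hW, inv_div, div_pow, div_eq_iff hW2, sub_mul,
    div_mul_cancel₀ _ hW2]
  ring

/-- The geometric sum of `1/V`. -/
noncomputable def Sg (p : ℕ) (v : ℝ) : ℝ :=
  ∑ i ∈ Finset.range p, (1 - (1 - 3 * v) ^ 2) ^ i

lemma E_eq {φ t : ℝ} (hφ : 0.525245 ≤ φ) (hφ2 : φ ≤ 0.619063) (ha : 2 - 3 * φ < t)
    (hb : t < 3 * (1 - φ) / 2) (n p : ℕ) :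
    (Ufun φ t / Vfun φ t) ^ n * (1 - (Vfun φ t) ^ (-(p : ℤ))) =
      (27 * (1 - φ) / (3 * φ - 1)) ^ n *
        ((vco φ t ^ 2 * (1 - vco φ t) / (1 - 3 * vco φ t)) ^ n * (1 - 3 * vco φ t) ^ 2
          * Sg p (vco φ t)) := by
  have hz : (Vfun φ t) ^ (-(p : ℤ)) = (1 - (1 - 3 * vco φ t) ^ 2) ^ p := by
    rw [zpow_neg, zpow_natCast, ← inv_pow, Vinv_eq hφ hφ2 ha hb]
  have hg : 1 - (1 - (1 - 3 * vco φ t) ^ 2) ^ p = (1 - 3 * vco φ t) ^ 2 * Sg p (vco φ t) := by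
    have := mul_neg_geom_sum (1 - (1 - 3 * vco φ t) ^ 2) p
    rw [← this, Sg]
    ring
  rw [hz, hg, UV_eq hφ hφ2 ha hb, mul_pow]
  ring

lemma Sg_pos {p : ℕ} (hp : 1 ≤ p) {v : ℝ} (h0 : 0 < v) (h1 : v < 1 / 3) : 0 < Sg p v := by
  unfold Sg
  have : 0 < 1 - (1 - 3 * v) ^ 2 := by nlinarith
  apply Finset.sum_pos
  · intro i _
    positivity
  · exact ⟨0, Finset.mem_range.2 hp⟩

lemma Sg_le {p : ℕ} {v w : ℝ} (h0 : 0 < v) (hvw : v < w) (h1 : w < 1 / 3) :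
    Sg p v ≤ Sg p w := by
  unfold Sg
  apply Finset.sum_le_sum
  intro i _
  apply pow_le_pow_left₀
  · nlinarith
  · nlinarith

lemma cub_lt {v w : ℝ} (h0 : 0 < v) (hvw : v < w) (h1 : w < 1 / 3) :
    v ^ 2 * (1 - v) < w ^ 2 * (1 - w) := by
  have : 0 < (w - v) * ((w + v) - (w ^ 2 + w * v + v ^ 2)) := by
    apply mul_pos (by linarith)
    nlinarith [mul_pos h0 (h0.trans hvw)]
  nlinarith

lemma G_lt_two {p : ℕ} (hp : 1 ≤ p) (m : ℕ) {v w : ℝ} (h0 : 0 < v) (hvw : v < w)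
    (h1 : w < 1 / 3) :
    (v ^ 2 * (1 - v) / (1 - 3 * v)) ^ (m + 2) * (1 - 3 * v) ^ 2 * Sg p v <
      (w ^ 2 * (1 - w) / (1 - 3 * w)) ^ (m + 2) * (1 - 3 * w) ^ 2 * Sg p w := by
  have key : ∀ u : ℝ, u < 1 / 3 →
      (u ^ 2 * (1 - u) / (1 - 3 * u)) ^ (m + 2) * (1 - 3 * u) ^ 2 =
      (u ^ 2 * (1 - u) / (1 - 3 * u)) ^ m * (u ^ 2 * (1 - u)) ^ 2 := by
    intro u hu
    have : 1 - 3 * u ≠ 0 := by linarith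
    rw [pow_add, mul_assoc, ← mul_pow, div_mul_cancel₀ _ this]
  rw [key v (by linarith), key w h1]
  have hc := cub_lt h0 hvw h1
  have hcv : 0 < v ^ 2 * (1 - v) := mul_pos (by positivity) (by linarith)
  have hbv : 0 < 1 - 3 * v := by linarith
  have hbw : 0 < 1 - 3 * w := by linarith
  have hq : v ^ 2 * (1 - v) / (1 - 3 * v) ≤ w ^ 2 * (1 - w) / (1 - 3 * w) :=
    div_le_div₀ (hcv.trans hc).le hc.le hbw (by linarith)
  have hqv : 0 < v ^ 2 * (1 - v) / (1 - 3 * v) := div_pos hcv hbv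
  have hqw := hqv.trans_le hq
  apply mul_lt_mul _ (Sg_le h0 hvw h1) (Sg_pos hp h0 (by linarith)) (by positivity)
  apply mul_lt_mul_of_le_of_lt_of_pos_of_nonneg
  · exact pow_le_pow_left₀ hqv.le hq m
  · exact pow_lt_pow_left₀ hc hcv.le (by norm_num)
  · positivity
  · positivity

lemma G_lt_one {p : ℕ} (hp : 1 ≤ p) {v w : ℝ} (h0 : 0 < v) (hvw : v < w)
    (h1 : w < 1 / 3) (hs : w ≤ (3 - Real.sqrt 3) / 6) :
    (v ^ 2 * (1 - v) / (1 - 3 * v)) ^ 1 * (1 - 3 * v) ^ 2 * Sg p v <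
      (w ^ 2 * (1 - w) / (1 - 3 * w)) ^ 1 * (1 - 3 * w) ^ 2 * Sg p w := by
  have key : ∀ u : ℝ, u < 1 / 3 →
      (u ^ 2 * (1 - u) / (1 - 3 * u)) ^ 1 * (1 - 3 * u) ^ 2 = gaux u := by
    intro u hu
    have : 1 - 3 * u ≠ 0 := by linarith
    unfold gaux
    rw [pow_one, sq (1 - 3 * u), ← mul_assoc, div_mul_cancel₀ _ this]
  rw [key v (by linarith), key w h1]
  have hg : gaux v < gaux w := gaux_mono ⟨h0.le, by linarith⟩ ⟨by linarith, hs⟩ hvw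
  have hgw : 0 < gaux w :=
    mul_pos (mul_pos (pow_pos (by linarith) 2) (by linarith)) (by linarith)
  exact mul_lt_mul hg (Sg_le h0 hvw h1) (Sg_pos hp h0 (by linarith)) hgw.le

/-- monotonicity of `E_{x,p}(β₁) = (U/V)^{x−2p}(1 − V^{−p})` at fixed
`φ ∈ [0.525245, 0.619063]` on `I_φ = (2 − 3φ, 3(1 − φ)/2)`: (i) strictly increasing for
`x ≥ 2p + 2`; (ii) with `β₁* = √3 − 3(√3 − 1)φ`, the function
`E_{3,1}(β₁) = 27(1 − φ)β₂β₃²/(β₁ + 6φ − 3)⁴` is strictly increasing on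
`I_φ ∩ (−∞, β₁*]` and strictly decreasing on `I_φ ∩ [β₁*, ∞)`; consequently `E_{x,p}`
with `x = 2p + 1` is strictly increasing on `I_φ ∩ (−∞, β₁*]`. -/
theorem E_monotone_in_beta_fixed_phi (φ : ℝ) (hφ1 : 0.525245 ≤ φ) (hφ2 : φ ≤ 0.619063) :
    (∀ p x : ℕ, 1 ≤ p → 2 * p + 2 ≤ x →
        StrictMonoOn
          (fun t : ℝ => (Ufun φ t / Vfun φ t) ^ (x - 2 * p) * (1 - (Vfun φ t) ^ (-(p : ℤ))))
          (Set.Ioo (2 - 3 * φ) (3 * (1 - φ) / 2))) ∧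
      StrictMonoOn
        (fun t : ℝ => 27 * (1 - φ) * (3 * (1 - φ) - 2 * t) * (t - 2 + 3 * φ) ^ 2 /
          (t + 6 * φ - 3) ^ 4)
        (Set.Ioo (2 - 3 * φ) (3 * (1 - φ) / 2) ∩
          Set.Iic (Real.sqrt 3 - 3 * (Real.sqrt 3 - 1) * φ)) ∧
      StrictAntiOn
        (fun t : ℝ => 27 * (1 - φ) * (3 * (1 - φ) - 2 * t) * (t - 2 + 3 * φ) ^ 2 /
          (t + 6 * φ - 3) ^ 4)
        (Set.Ioo (2 - 3 * φ) (3 * (1 - φ) / 2) ∩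
          Set.Ici (Real.sqrt 3 - 3 * (Real.sqrt 3 - 1) * φ)) ∧
      ∀ p x : ℕ, 1 ≤ p → x = 2 * p + 1 →
        StrictMonoOn
          (fun t : ℝ => (Ufun φ t / Vfun φ t) ^ (x - 2 * p) * (1 - (Vfun φ t) ^ (-(p : ℤ))))
          (Set.Ioo (2 - 3 * φ) (3 * (1 - φ) / 2) ∩
            Set.Iic (Real.sqrt 3 - 3 * (Real.sqrt 3 - 1) * φ)) := by
  have hk : 0 < 27 * (1 - φ) / (3 * φ - 1) := by
    have h1 : φ < 1 := by norm_num at hφ2; linarith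
    have h2 : 1 < 3 * φ := by norm_num at hφ1; linarith
    exact div_pos (by linarith) (by linarith)
  refine ⟨?_, ?_, ?_, ?_⟩
  · intro p x hp hx a ha b hb hab
    obtain ⟨m, hm⟩ : ∃ m, x - 2 * p = m + 2 := ⟨x - 2 * p - 2, by omega⟩
    simp only [hm]
    rw [E_eq hφ1 hφ2 ha.1 ha.2, E_eq hφ1 hφ2 hb.1 hb.2]
    exact mul_lt_mul_of_pos_left (G_lt_two hp m (vco_pos hφ1 ha.1) (vco_lt hφ1 ha.1 hab)
      (vco_lt_third hφ1 hb.1 hb.2)) (pow_pos hk _)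
  · intro a ha b hb hab
    simp only
    rw [E31_eq hφ1 ha.1.1, E31_eq hφ1 hb.1.1]
    refine mul_lt_mul_of_pos_left (gaux_mono ⟨(vco_pos hφ1 ha.1.1).le, ?_⟩
      ⟨(vco_pos hφ1 hb.1.1).le, ?_⟩ (vco_lt hφ1 ha.1.1 hab)) hk
    · rw [← vco_star hφ1]
      exact vco_le hφ1 ha.1.1 ha.2
    · rw [← vco_star hφ1]
      exact vco_le hφ1 hb.1.1 hb.2
  · intro a ha b hb hab
    simp only
    rw [E31_eq hφ1 ha.1.1, E31_eq hφ1 hb.1.1]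
    refine mul_lt_mul_of_pos_left (gaux_anti ⟨?_, (vco_lt_third hφ1 ha.1.1 ha.1.2).le⟩
      ⟨?_, (vco_lt_third hφ1 hb.1.1 hb.1.2).le⟩ (vco_lt hφ1 ha.1.1 hab)) hk
    · rw [← vco_star hφ1]
      exact vco_le hφ1 (star_gt hφ1) ha.2
    · rw [← vco_star hφ1]
      exact vco_le hφ1 (star_gt hφ1) hb.2
  · intro p x hp hx a ha b hb hab
    have hm : x - 2 * p = 1 := by omega
    simp only [hm]
    rw [E_eq hφ1 hφ2 ha.1.1 ha.1.2, E_eq hφ1 hφ2 hb.1.1 hb.1.2]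
    refine mul_lt_mul_of_pos_left (G_lt_one hp (vco_pos hφ1 ha.1.1) (vco_lt hφ1 ha.1.1 hab)
      (vco_lt_third hφ1 hb.1.1 hb.1.2) ?_) (pow_pos hk _)
    rw [← vco_star hφ1]
    exact vco_le hφ1 hb.1.1 hb.2
end

section
/- Monotonicity of E_{x,p} in φ at fixed β₁: fix β₁ ∈ [0.33018, 0.52891], and for integers p ≥ 1 and x ≥ 2p define E_{x,p}(φ) = (U/V)^{x−2p}·(1 − V^{−p}) with U = U(φ, β₁), V = V(φ, β₁), on the interval J_{β₁} = ((2 − β₁)/3, 1 − 2β₁/3) of φ for which β₃ > 0 and β₂ > 0. Set φ* = (1/12)·[15 − 9/(2 − β₁) − 2β₁ − √3·(1 − β₁)·√(4β₁² + 4β₁ + 3)/(2 − β₁)]. Then: (i) for all integers p ≥ 1 and x ≥ 2p + 3, E_{x,p} is strictly increasing on J_{β₁}; (ii) for all p ≥ 1 and x ∈ {2p + 1, 2p + 2}, E_{x,p} is strictly increasing on J_{β₁} ∩ (−∞, φ*]. Moreover, as a function of β₁ on [0, 1], φ*(β₁) is decreasing, with φ*(0) = 3/4 and φ*(1) = 1/3.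 -/
/-- `φ* = (1/12)[15 − 9/(2 − β₁) − 2β₁ − √3(1 − β₁)√(4β₁² + 4β₁ + 3)/(2 − β₁)]`. -/
noncomputable def phiStar (β₁ : ℝ) : ℝ :=
  (1 / 12) * (15 - 9 / (2 - β₁) - 2 * β₁ -
    Real.sqrt 3 * (1 - β₁) * Real.sqrt (4 * β₁ ^ 2 + 4 * β₁ + 3) / (2 - β₁))


lemma aux_V (t b : ℝ) (hr : 0 < b - 2 + 3 * t) (hs : 0 < 3 * (1 - t) - 2 * b) :
    Vfun t b = (6 * t + b - 3) ^ 2 / (3 * (3 * t - b) * (b - 2 + 3 * t)) := by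
  have hY : 0 < 3 * t - b := by linarith
  unfold Vfun
  field_simp
  ring

lemma aux_W (t b : ℝ) (hr : 0 < b - 2 + 3 * t) (hs : 0 < 3 * (1 - t) - 2 * b) :
    Ufun t b / Vfun t b =
      27 * (1 - t) * (b - 2 + 3 * t) ^ 2 / ((3 * (1 - t) - 2 * b) * (6 * t + b - 3) ^ 2) := by
  have hY : 0 < 3 * t - b := by linarith
  have hM : 0 < 6 * t + b - 3 := by linarith
  rw [aux_V t b hr hs]
  unfold Ufun
  generalize b - 2 + 3 * t = r at *
  generalize 3 * (1 - t) - 2 * b = s at *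
  generalize 3 * t - b = Y at *
  generalize 6 * t + b - 3 = M at *
  field_simp
  try ring

lemma aux_q (t b : ℝ) (hr : 0 < b - 2 + 3 * t) (hs : 0 < 3 * (1 - t) - 2 * b) :
    (Vfun t b)⁻¹ = 1 - ((3 * (1 - t) - 2 * b) / (6 * t + b - 3)) ^ 2 := by
  have hY : 0 < 3 * t - b := by linarith
  have hM : 0 < 6 * t + b - 3 := by linarith
  rw [aux_V t b hr hs]
  field_simp
  ring

lemma aux_W_mono (b t u : ℝ) (hb : 0 < b) (hr : 0 < b - 2 + 3 * t)
    (hs : 0 < 3 * (1 - u) - 2 * b) (htu : t < u) :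
    0 < Ufun t b / Vfun t b ∧ Ufun t b / Vfun t b < Ufun u b / Vfun u b := by
  have hr' : 0 < b - 2 + 3 * u := by linarith
  have hs' : 0 < 3 * (1 - t) - 2 * b := by linarith
  have hM : 0 < 6 * t + b - 3 := by linarith
  have hM' : 0 < 6 * u + b - 3 := by linarith
  have h1 : 0 < 1 - t := by linarith
  have h1' : 0 < 1 - u := by linarith
  rw [aux_W t b hr hs', aux_W u b hr' hs]
  refine ⟨by positivity, ?_⟩
  have e : ∀ v : ℝ, 27 * (1 - v) * (b - 2 + 3 * v) ^ 2 /
      ((3 * (1 - v) - 2 * b) * (6 * v + b - 3) ^ 2) =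
      (27 * (1 - v) / (3 * (1 - v) - 2 * b)) * ((b - 2 + 3 * v) / (6 * v + b - 3)) ^ 2 := by
    intro v
    rw [div_pow, div_mul_div_comm]
  rw [e, e]
  have hA : 27 * (1 - t) / (3 * (1 - t) - 2 * b) < 27 * (1 - u) / (3 * (1 - u) - 2 * b) := by
    rw [div_lt_div_iff₀ hs' hs]
    nlinarith [mul_pos hb (sub_pos.2 htu)]
  have hB : (b - 2 + 3 * t) / (6 * t + b - 3) ≤ (b - 2 + 3 * u) / (6 * u + b - 3) := by
    rw [div_le_div_iff₀ hM hM']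
    have : 0 < 1 - b := by linarith
    nlinarith [mul_pos this (sub_pos.2 htu)]
  have hA0 : 0 < 27 * (1 - u) / (3 * (1 - u) - 2 * b) := by positivity
  have hB0 : 0 < (b - 2 + 3 * t) / (6 * t + b - 3) := by positivity
  exact mul_lt_mul hA (pow_le_pow_left₀ hB0.le hB 2) (by positivity) hA0.le

lemma aux_q_mono (b t u : ℝ) (hr : 0 < b - 2 + 3 * t)
    (hs : 0 < 3 * (1 - u) - 2 * b) (htu : t < u) :
    0 < (Vfun t b)⁻¹ ∧ (Vfun t b)⁻¹ ≤ (Vfun u b)⁻¹ := by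
  have hr' : 0 < b - 2 + 3 * u := by linarith
  have hs' : 0 < 3 * (1 - t) - 2 * b := by linarith
  have hM : 0 < 6 * t + b - 3 := by linarith
  have hM' : 0 < 6 * u + b - 3 := by linarith
  have hY : 0 < 3 * t - b := by linarith
  constructor
  · rw [aux_V t b hr hs']
    positivity
  · rw [aux_q t b hr hs', aux_q u b hr' hs]
    have : (3 * (1 - u) - 2 * b) / (6 * u + b - 3) ≤ (3 * (1 - t) - 2 * b) / (6 * t + b - 3) :=
      div_le_div₀ hs'.le (by linarith) hM (by linarith)
    have h0 : 0 < (3 * (1 - u) - 2 * b) / (6 * u + b - 3) := by positivity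
    have := pow_le_pow_left₀ h0.le this 2
    linarith

/-- Reduction of the general claim to `p = 1` and a base exponent `k`. -/
lemma aux_reduce (b t u : ℝ) (hb : 0 < b) (hr : 0 < b - 2 + 3 * t)
    (hs : 0 < 3 * (1 - u) - 2 * b) (htu : t < u) (k n p : ℕ) (hkn : k ≤ n) (hp : 1 ≤ p)
    (hk : (Ufun t b / Vfun t b) ^ k * (1 - (Vfun t b)⁻¹) <
      (Ufun u b / Vfun u b) ^ k * (1 - (Vfun u b)⁻¹)) :
    (Ufun t b / Vfun t b) ^ n * (1 - (Vfun t b) ^ (-(p : ℤ))) <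
      (Ufun u b / Vfun u b) ^ n * (1 - (Vfun u b) ^ (-(p : ℤ))) := by
  obtain ⟨hW0, hW⟩ := aux_W_mono b t u hb hr hs htu
  obtain ⟨hq0, hq⟩ := aux_q_mono b t u hr hs htu
  have hr' : 0 < b - 2 + 3 * u := by linarith
  have hs' : 0 < 3 * (1 - t) - 2 * b := by linarith
  have hq1 : 0 ≤ 1 - (Vfun t b)⁻¹ := by
    rw [aux_q t b hr hs']
    have := sq_nonneg ((3 * (1 - t) - 2 * b) / (6 * t + b - 3))
    linarith
  have e : ∀ v : ℝ, (Ufun v b / Vfun v b) ^ n * (1 - (Vfun v b) ^ (-(p : ℤ))) =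
      ((Ufun v b / Vfun v b) ^ k * (1 - (Vfun v b)⁻¹)) *
      ((Ufun v b / Vfun v b) ^ (n - k) * ∑ i ∈ Finset.range p, ((Vfun v b)⁻¹) ^ i) := by
    intro v
    have h1 : (Vfun v b) ^ (-(p : ℤ)) = ((Vfun v b)⁻¹) ^ p := by
      rw [zpow_neg, zpow_natCast, inv_pow]
    have h2 := mul_neg_geom_sum ((Vfun v b)⁻¹) p
    have h3 : (Ufun v b / Vfun v b) ^ n =
        (Ufun v b / Vfun v b) ^ k * (Ufun v b / Vfun v b) ^ (n - k) := by
      rw [← pow_add]; congr 1; omega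
    rw [h1, ← h2, h3]; ring
  rw [e, e]
  have hS : ∑ i ∈ Finset.range p, ((Vfun t b)⁻¹) ^ i ≤ ∑ i ∈ Finset.range p, ((Vfun u b)⁻¹) ^ i :=
    Finset.sum_le_sum fun i _ => pow_le_pow_left₀ hq0.le hq i
  have hS0 : 0 < ∑ i ∈ Finset.range p, ((Vfun t b)⁻¹) ^ i :=
    Finset.sum_pos (fun i _ => pow_pos hq0 i) (Finset.nonempty_range_iff.2 (by omega))
  have hP := pow_le_pow_left₀ hW0.le hW.le (n - k)
  have hP0 := pow_pos hW0 (n - k)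
  have hK0 : 0 ≤ (Ufun t b / Vfun t b) ^ k * (1 - (Vfun t b)⁻¹) :=
    mul_nonneg (pow_pos hW0 k).le hq1
  exact mul_lt_mul hk (mul_le_mul hP hS hS0.le (hP0.le.trans hP)) (mul_pos hP0 hS0)
    (hK0.trans hk.le)

lemma aux_three (b : ℝ) (hb : 0.33018 ≤ b) :
    StrictMonoOn (fun t : ℝ => (1 - t) ^ 3 * (b - 2 + 3 * t) ^ 6 /
      ((3 * (1 - t) - 2 * b) * (6 * t + b - 3) ^ 8))
      (Set.Ioo ((2 - b) / 3) (1 - 2 * b / 3)) := by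
  have hd : ∀ t ∈ Set.Ioo ((2 - b) / 3) (1 - 2 * b / 3), ∃ f' : ℝ, 0 < f' ∧
      HasDerivAt (fun t : ℝ => (1 - t) ^ 3 * (b - 2 + 3 * t) ^ 6 /
      ((3 * (1 - t) - 2 * b) * (6 * t + b - 3) ^ 8)) f' t := by
    rintro t ⟨h1, h2⟩
    have hr : 0 < b - 2 + 3 * t := by linarith
    have hs : 0 < 3 * (1 - t) - 2 * b := by linarith
    have hM : 0 < 6 * t + b - 3 := by linarith
    have ht : 0 < 1 - t := by linarith
    have i1 : HasDerivAt (fun t : ℝ => 1 - t) (-1) t := by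
      simpa using (hasDerivAt_id t).const_sub 1
    have i2 : HasDerivAt (fun t : ℝ => b - 2 + 3 * t) 3 t := by
      simpa using ((hasDerivAt_id t).const_mul 3).const_add (b - 2)
    have i3 : HasDerivAt (fun t : ℝ => 3 * (1 - t) - 2 * b) (-3) t := by
      simpa using (i1.const_mul 3).sub_const (2 * b)
    have i4 : HasDerivAt (fun t : ℝ => 6 * t + b - 3) 6 t := by
      simpa using ((((hasDerivAt_id t).const_mul 6).add_const b).sub_const 3)
    have hD : (3 * (1 - t) - 2 * b) * (6 * t + b - 3) ^ 8 ≠ 0 := by positivity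
    refine ⟨_, ?_, ((i1.pow 3).mul (i2.pow 6)).div (i3.mul (i4.pow 8)) hD⟩
    simp only [Pi.pow_apply, Pi.mul_apply]
    apply div_pos _ (by positivity)
    have key : 0 < (-(b - 2 + 3 * t) + 6 * (1 - t)) * (3 * (1 - t) - 2 * b) * (6 * t + b - 3) +
        (1 - t) * (b - 2 + 3 * t) * (6 * t + b - 3) -
        16 * (1 - t) * (b - 2 + 3 * t) * (3 * (1 - t) - 2 * b) := by
      obtain ⟨r, hr'⟩ : ∃ r, r = b - 2 + 3 * t := ⟨_, rfl⟩
      obtain ⟨s, hs'⟩ : ∃ s, s = 3 * (1 - t) - 2 * b := ⟨_, rfl⟩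
      have hbb : b = 1 - r - s := by linarith
      have htt : t = (2 - b + r) / 3 := by linarith
      rw [← hr'] at hr
      rw [← hs'] at hs
      have hq : 0 < 594 * (r + s) ^ 2 - 1341 * r * (r + s) + 894 * r ^ 2 := by
        nlinarith [sq_nonneg (1341 * r - 1188 * (r + s)), mul_pos hr hr]
      have hg : 0 ≤ (b - 0.49 * (r + s)) * (6 * (r + s) ^ 2 - 9 * r * (r + s) + 6 * r ^ 2) := by
        apply mul_nonneg
        · linarith
        · nlinarith [sq_nonneg (4 * r - 3 * (r + s)), sq_nonneg (r + s)]
      have hq' := mul_pos (add_pos hr hs) hq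
      rw [htt]
      rw [hbb] at hg ⊢
      nlinarith [hg, hq']
    have := mul_pos (show 0 < 3 * (1 - t) ^ 2 * (b - 2 + 3 * t) ^ 5 * (6 * t + b - 3) ^ 7 by
      positivity) key
    convert this using 1
    push_cast
    ring
  apply strictMonoOn_of_deriv_pos (convex_Ioo _ _)
  · intro t ht
    obtain ⟨f', _, h⟩ := hd t ht
    exact h.continuousAt.continuousWithinAt
  · intro t ht
    rw [interior_Ioo] at ht
    obtain ⟨f', h0, h⟩ := hd t ht
    rwa [h.deriv]

lemma aux_Q (b t : ℝ) (hb : 0 < b) (hb1 : b < 1) (ht : t < phiStar b) :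
    0 < (1 - b) ^ 2 * (1 + b) + (b - 2 + 3 * t) * (2 * (1 - b) ^ 2 - 7 * (1 - b)) +
      (b - 2 + 3 * t) ^ 2 * (2 + 2 * (1 - b)) := by
  unfold phiStar at ht
  have h3 : Real.sqrt 3 ^ 2 = 3 := Real.sq_sqrt (by norm_num)
  have h4 : Real.sqrt (4 * b ^ 2 + 4 * b + 3) ^ 2 = 4 * b ^ 2 + 4 * b + 3 :=
    Real.sq_sqrt (by positivity)
  set x := Real.sqrt 3
  set y := Real.sqrt (4 * b ^ 2 + 4 * b + 3)
  have hx : 0 ≤ x := Real.sqrt_nonneg _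
  have hy : 0 ≤ y := Real.sqrt_nonneg _
  have h2 : 0 < 2 - b := by linarith
  have hc : 0 < 1 - b := by linarith
  have e : (1 / 12) * (15 - 9 / (2 - b) - 2 * b - x * (1 - b) * y / (2 - b)) =
      ((15 - 2 * b) * (2 - b) - 9 - x * (1 - b) * y) / (12 * (2 - b)) := by
    field_simp
    ring
  rw [e, lt_div_iff₀ (by positivity)] at ht
  have hlt : (1 - b) * (x * y) < (1 - b) * (5 + 2 * b) - 4 * (2 - b) * (b - 2 + 3 * t) := by
    nlinarith
  have hsq := pow_lt_pow_left₀ hlt (by positivity) (two_ne_zero)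
  have : ((1 - b) * (x * y)) ^ 2 = (1 - b) ^ 2 * (3 * (4 * b ^ 2 + 4 * b + 3)) := by
    rw [mul_pow, mul_pow, h3, h4]
  rw [this] at hsq
  have hfin : 0 < 8 * (2 - b) * ((1 - b) ^ 2 * (1 + b) +
      (b - 2 + 3 * t) * (2 * (1 - b) ^ 2 - 7 * (1 - b)) +
      (b - 2 + 3 * t) ^ 2 * (2 + 2 * (1 - b))) := by
    nlinarith
  exact pos_of_mul_pos_right hfin (by positivity)

lemma aux_one (b : ℝ) (hb : 0 < b) (hb1 : b < 1) :
    StrictMonoOn (fun t : ℝ => (1 - t) * (b - 2 + 3 * t) ^ 2 * (3 * (1 - t) - 2 * b) /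
      (6 * t + b - 3) ^ 4)
      (Set.Ioo ((2 - b) / 3) (1 - 2 * b / 3) ∩ Set.Iic (phiStar b)) := by
  have hd : ∀ t ∈ Set.Ioo ((2 - b) / 3) (1 - 2 * b / 3), ∃ f' : ℝ, (t < phiStar b → 0 < f') ∧
      HasDerivAt (fun t : ℝ => (1 - t) * (b - 2 + 3 * t) ^ 2 * (3 * (1 - t) - 2 * b) /
      (6 * t + b - 3) ^ 4) f' t := by
    rintro t ⟨h1, h2⟩
    have hr : 0 < b - 2 + 3 * t := by linarith
    have hs : 0 < 3 * (1 - t) - 2 * b := by linarith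
    have hM : 0 < 6 * t + b - 3 := by linarith
    have ht : 0 < 1 - t := by linarith
    have i1 : HasDerivAt (fun t : ℝ => 1 - t) (-1) t := by
      simpa using (hasDerivAt_id t).const_sub 1
    have i2 : HasDerivAt (fun t : ℝ => b - 2 + 3 * t) 3 t := by
      simpa using ((hasDerivAt_id t).const_mul 3).const_add (b - 2)
    have i3 : HasDerivAt (fun t : ℝ => 3 * (1 - t) - 2 * b) (-3) t := by
      simpa using (i1.const_mul 3).sub_const (2 * b)
    have i4 : HasDerivAt (fun t : ℝ => 6 * t + b - 3) 6 t := by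
      simpa using ((((hasDerivAt_id t).const_mul 6).add_const b).sub_const 3)
    have hD : (6 * t + b - 3) ^ 4 ≠ 0 := by positivity
    refine ⟨_, ?_, ((i1.mul (i2.pow 2)).mul i3).div (i4.pow 4) hD⟩
    intro hlt
    simp only [Pi.pow_apply, Pi.mul_apply]
    apply div_pos _ (by positivity)
    have := mul_pos (show 0 < 2 * (b - 2 + 3 * t) * (6 * t + b - 3) ^ 3 by
      positivity) (aux_Q b t hb hb1 hlt)
    convert this using 1
    push_cast
    ring
  apply strictMonoOn_of_deriv_pos ((convex_Ioo _ _).inter (convex_Iic _))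
  · intro t ht
    obtain ⟨f', _, h⟩ := hd t ht.1
    exact h.continuousAt.continuousWithinAt
  · intro t ht
    rw [interior_inter, interior_Ioo, interior_Iic] at ht
    obtain ⟨f', h0, h⟩ := hd t ht.1
    rw [h.deriv]
    exact h0 ht.2

lemma aux_phi (b : ℝ) (hb : 0 ≤ b) (hb1 : b ≤ 1) :
    phiStar b = (2 - b) / 3 + (2 / 3) * ((1 - b ^ 2) /
      (5 + 2 * b + Real.sqrt 3 * Real.sqrt (4 * b ^ 2 + 4 * b + 3))) := by
  unfold phiStar
  have h3 : Real.sqrt 3 ^ 2 = 3 := Real.sq_sqrt (by norm_num)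
  have h4 : Real.sqrt (4 * b ^ 2 + 4 * b + 3) ^ 2 = 4 * b ^ 2 + 4 * b + 3 :=
    Real.sq_sqrt (by positivity)
  set x := Real.sqrt 3
  set y := Real.sqrt (4 * b ^ 2 + 4 * b + 3)
  have hx : 0 ≤ x := Real.sqrt_nonneg _
  have hy : 0 ≤ y := Real.sqrt_nonneg _
  have h2 : 0 < 2 - b := by linarith
  have hxy : (x * y) ^ 2 = 3 * (4 * b ^ 2 + 4 * b + 3) := by rw [mul_pow, h3, h4]
  have hD : 0 < 5 + 2 * b + x * y := by positivity
  rw [mul_right_comm]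
  generalize x * y = z at *
  field_simp
  linear_combination (-(1 - b) * 3) * hxy

lemma aux_anti : StrictAntiOn phiStar (Set.Icc 0 1) := by
  rintro a ⟨ha0, ha1⟩ b ⟨hb0, hb1⟩ hab
  rw [aux_phi a ha0 ha1, aux_phi b hb0 hb1]
  have hsq : Real.sqrt (4 * a ^ 2 + 4 * a + 3) ≤ Real.sqrt (4 * b ^ 2 + 4 * b + 3) :=
    Real.sqrt_le_sqrt (by nlinarith)
  have h : (1 - b ^ 2) / (5 + 2 * b + Real.sqrt 3 * Real.sqrt (4 * b ^ 2 + 4 * b + 3)) ≤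
      (1 - a ^ 2) / (5 + 2 * a + Real.sqrt 3 * Real.sqrt (4 * a ^ 2 + 4 * a + 3)) := by
    have := mul_le_mul_of_nonneg_left hsq (Real.sqrt_nonneg 3)
    apply div_le_div₀
    · nlinarith
    · nlinarith
    · positivity
    · linarith
  linarith

/-- monotonicity of `E_{x,p}(φ) = (U/V)^{x−2p}(1 − V^{−p})` at fixed
`β₁ ∈ [0.33018, 0.52891]` on `J_{β₁} = ((2 − β₁)/3, 1 − 2β₁/3)`: (i) strictly
increasing for `x ≥ 2p + 3`; (ii) strictly increasing on `J_{β₁} ∩ (−∞, φ*]` for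
`x ∈ {2p+1, 2p+2}`.  Moreover `φ*` is decreasing on `[0,1]`, with `φ*(0) = 3/4` and
`φ*(1) = 1/3`. -/
theorem E_monotone_in_phi_fixed_beta :
    (∀ β₁ : ℝ, 0.33018 ≤ β₁ → β₁ ≤ 0.52891 →
        (∀ p x : ℕ, 1 ≤ p → 2 * p + 3 ≤ x →
          StrictMonoOn
            (fun t : ℝ =>
              (Ufun t β₁ / Vfun t β₁) ^ (x - 2 * p) * (1 - (Vfun t β₁) ^ (-(p : ℤ))))
            (Set.Ioo ((2 - β₁) / 3) (1 - 2 * β₁ / 3))) ∧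
        (∀ p x : ℕ, 1 ≤ p → (x = 2 * p + 1 ∨ x = 2 * p + 2) →
          StrictMonoOn
            (fun t : ℝ =>
              (Ufun t β₁ / Vfun t β₁) ^ (x - 2 * p) * (1 - (Vfun t β₁) ^ (-(p : ℤ))))
            (Set.Ioo ((2 - β₁) / 3) (1 - 2 * β₁ / 3) ∩ Set.Iic (phiStar β₁)))) ∧
      StrictAntiOn phiStar (Set.Icc 0 1) ∧ phiStar 0 = 3 / 4 ∧ phiStar 1 = 1 / 3 := by
  refine ⟨?_, aux_anti, ?_, ?_⟩
  · intro b hb hb'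
    have hb0 : 0 < b := by norm_num at hb; linarith
    have hb1 : b < 1 := by norm_num at hb'; linarith
    constructor
    · intro p x hp hx t ht u hu htu
      have hr : 0 < b - 2 + 3 * t := by linarith [ht.1]
      have hs : 0 < 3 * (1 - u) - 2 * b := by linarith [hu.2]
      apply aux_reduce b t u hb0 hr hs htu 3 (x - 2 * p) p (by omega) hp
      have h := mul_lt_mul_of_pos_left (aux_three b hb ht hu htu) (show (0 : ℝ) < 27 ^ 3 by norm_num)
      have e : ∀ v : ℝ, 0 < b - 2 + 3 * v → 0 < 3 * (1 - v) - 2 * b →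
          (Ufun v b / Vfun v b) ^ 3 * (1 - (Vfun v b)⁻¹) =
          27 ^ 3 * ((1 - v) ^ 3 * (b - 2 + 3 * v) ^ 6 /
            ((3 * (1 - v) - 2 * b) * (6 * v + b - 3) ^ 8)) := by
        intro v h1 h2
        have hM : 0 < 6 * v + b - 3 := by linarith
        rw [aux_W v b h1 h2, aux_q v b h1 h2]
        generalize b - 2 + 3 * v = r at *
        generalize 3 * (1 - v) - 2 * b = s at *
        generalize 6 * v + b - 3 = M at *
        field_simp
        try ring
      rw [e t hr (by linarith), e u (by linarith) hs]
      exact h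
    · intro p x hp hx t ht u hu htu
      have hr : 0 < b - 2 + 3 * t := by linarith [ht.1.1]
      have hs : 0 < 3 * (1 - u) - 2 * b := by linarith [hu.1.2]
      apply aux_reduce b t u hb0 hr hs htu 1 (x - 2 * p) p (by omega) hp
      have h := mul_lt_mul_of_pos_left (aux_one b hb0 hb1 ht hu htu) (show (0 : ℝ) < 27 by norm_num)
      have e : ∀ v : ℝ, 0 < b - 2 + 3 * v → 0 < 3 * (1 - v) - 2 * b →
          (Ufun v b / Vfun v b) ^ 1 * (1 - (Vfun v b)⁻¹) =
          27 * ((1 - v) * (b - 2 + 3 * v) ^ 2 * (3 * (1 - v) - 2 * b) / (6 * v + b - 3) ^ 4) := by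
        intro v h1 h2
        have hM : 0 < 6 * v + b - 3 := by linarith
        rw [aux_W v b h1 h2, aux_q v b h1 h2]
        generalize b - 2 + 3 * v = r at *
        generalize 3 * (1 - v) - 2 * b = s at *
        generalize 6 * v + b - 3 = M at *
        field_simp
        try ring
      rw [e t hr (by linarith), e u (by linarith) hs]
      exact h
  · have h3 : Real.sqrt 3 * Real.sqrt 3 = 3 := Real.mul_self_sqrt (by norm_num)
    unfold phiStar
    norm_num [h3]
  · unfold phiStar
    norm_num
end

section
/- Monotonicity of V* and U*/V*: for β₁ ∈ [0, 1] set A(β₁) = 9 − √3·√(3 + 4β₁ + 4β₁²) and B(β₁) = 4 − 2β₁ (so 3 ≤ A ≤ 6, 2 ≤ B ≤ 4, A − B > 0 and 3B − A > 0 on [0,1]). Then the function V*(β₁) = (4/3)·A²/((A − B)·(A + 3B)) is strictly decreasing on [0, 1], and the function (U*/V*)(β₁) = (3/8)·(A − B)²·(3·(1 + 2β₁) + (9 − A))/((1 − β₁)·(3B − A)) is strictly increasing on [0, 1). -/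
/-- `A(β₁) = 9 − √3·√(3 + 4β₁ + 4β₁²)`. -/
noncomputable def Afun (b : ℝ) : ℝ := 9 - Real.sqrt 3 * Real.sqrt (3 + 4 * b + 4 * b ^ 2)

/-- `B(β₁) = 4 − 2β₁`. -/
def Bfun (b : ℝ) : ℝ := 4 - 2 * b

theorem aux_s (b : ℝ) (h0 : 0 ≤ b) (h1 : b ≤ 1) :
    ∃ s : ℝ, Afun b = 9 - s ∧ s ^ 2 = 9 + 12 * b + 12 * b ^ 2 ∧ 3 + 2 * b ≤ s ∧
      s ≤ 3 + 11 / 4 * b ∧ 7 + 10 * b < 3 * s := by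
  refine ⟨Real.sqrt 3 * Real.sqrt (3 + 4 * b + 4 * b ^ 2), rfl, ?_⟩
  have hs : (Real.sqrt 3 * Real.sqrt (3 + 4 * b + 4 * b ^ 2)) ^ 2 = 9 + 12 * b + 12 * b ^ 2 := by
    rw [mul_pow, Real.sq_sqrt (by norm_num), Real.sq_sqrt (by positivity)]; ring
  have hp : 0 ≤ Real.sqrt 3 * Real.sqrt (3 + 4 * b + 4 * b ^ 2) := by positivity
  generalize Real.sqrt 3 * Real.sqrt (3 + 4 * b + 4 * b ^ 2) = s at hs hp
  refine ⟨hs, ?_, ?_, ?_⟩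
  · exact abs_le_of_sq_le_sq' (by nlinarith) hp |>.2
  · exact abs_le_of_sq_le_sq' (by nlinarith [mul_nonneg h0 (sub_nonneg.2 h1)]) (by linarith) |>.2
  · exact abs_lt_of_sq_lt_sq (by nlinarith) (by linarith) |> abs_lt.1 |>.2

theorem aux_poly (y D : ℝ) (h0 : 0 ≤ y) (h1 : y ≤ 1) (hD : 2 - 3 / 4 * y ≤ D) :
    (16 * D * y * (3 + 2 * y) + 64 * y ^ 3) * (1 - y) < D ^ 2 * (3 + 2 * y) ^ 2 := by
  obtain ⟨d, rfl⟩ : ∃ d, D = 2 - 3 / 4 * y + d := ⟨D - (2 - 3 / 4 * y), by ring⟩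
  have hd : 0 ≤ d := by linarith
  have base : (16 * (2 - 3 / 4 * y) * y * (3 + 2 * y) + 64 * y ^ 3) * (1 - y)
      < (2 - 3 / 4 * y) ^ 2 * (3 + 2 * y) ^ 2 := by
    nlinarith [mul_nonneg h0 (sub_nonneg.2 h1), sq_nonneg (y - 1 / 2), sq_nonneg (y ^ 2 - 1 / 2),
      mul_nonneg (sq_nonneg y) (sub_nonneg.2 h1), mul_nonneg h0 (sq_nonneg (y - 1 / 2)),
      sq_nonneg (y ^ 2 - y), mul_nonneg (mul_nonneg h0 (sub_nonneg.2 h1)) (sq_nonneg (y - 1 / 2))]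
  have h2 : 0 ≤ (2 - 3 / 4 * y) * (3 + 2 * y) - 8 * y * (1 - y) := by
    nlinarith [sq_nonneg (y - 1 / 2), mul_nonneg h0 (sub_nonneg.2 h1)]
  have h3 : 0 ≤ d * (3 + 2 * y) * ((2 - 3 / 4 * y) * (3 + 2 * y) - 8 * y * (1 - y)) := by
    positivity
  have h4 : 0 ≤ d ^ 2 * (3 + 2 * y) ^ 2 := by positivity
  nlinarith

theorem aux_D (x y D E : ℝ) (h0 : 0 ≤ x) (hxy : x < y) (h1 : y < 1) (hD : 2 - 3 / 4 * y ≤ D)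
    (hE0 : 0 < E) (hE : (E - D) * (3 + 2 * y) ≤ 8 * y * (y - x)) :
    E ^ 2 * (1 - y) < D ^ 2 * (1 - x) := by
  have hp := aux_poly y D (by linarith) h1.le hD
  have hc : 0 < 3 + 2 * y := by linarith
  have h : (E * (3 + 2 * y)) ^ 2 ≤ (D * (3 + 2 * y) + 8 * y * (y - x)) ^ 2 := by
    apply pow_le_pow_left₀ (by positivity); linarith
  have h' := mul_le_mul_of_nonneg_right h (sub_nonneg.2 h1.le)
  have h2 := mul_lt_mul_of_pos_right hp (sub_pos.2 hxy)
  have h3 : 0 ≤ 64 * y ^ 2 * x * (1 - y) * (y - x) := by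
    have := sub_pos.2 h1
    have := sub_pos.2 hxy
    have : 0 ≤ y := by linarith
    positivity
  have h4 : (E ^ 2 * (1 - y)) * (3 + 2 * y) ^ 2 < (D ^ 2 * (1 - x)) * (3 + 2 * y) ^ 2 := by
    nlinarith
  exact lt_of_mul_lt_mul_right h4 (by positivity)

set_option maxHeartbeats 1000000

theorem aux_V_s18 :
      StrictAntiOn
        (fun b : ℝ => (4 / 3) * (Afun b) ^ 2 / ((Afun b - Bfun b) * (Afun b + 3 * Bfun b)))
        (Set.Icc 0 1) := by
  rintro x ⟨hx0, hx1⟩ y ⟨hy0, hy1⟩ hxy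
  obtain ⟨s, hA, hs, ls, us, vs⟩ := aux_s x hx0 hx1
  obtain ⟨t, hB, ht, lt, ut, vt⟩ := aux_s y hy0 hy1
  simp only [hA, hB, Bfun]
  have a1 : (9 - s) ^ 2 < 12 * (2 - x) ^ 2 := by nlinarith
  have a2 : (9 - t) ^ 2 < 12 * (2 - y) ^ 2 := by nlinarith
  have a3 : (9 - s) * (9 - t) < 12 * ((2 - x) * (2 - y)) := by
    have hx : 0 < 2 - x := by linarith
    have hy : 0 < 2 - y := by linarith
    have := mul_lt_mul'' a1 a2 (by positivity) (by positivity)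
    refine lt_of_pow_lt_pow_left₀ 2 (by positivity) ?_
    nlinarith
  have hst : (t - s) * (s + t) = 12 * (y - x) * (1 + x + y) := by nlinarith
  -- ratio B / A is decreasing
  have key : (4 - 2 * y) * (9 - s) < (4 - 2 * x) * (9 - t) := by
    have h : 0 < (9 * (y - x) - ((2 - x) * t - (2 - y) * s)) * (s + t) := by
      have : (9 * (y - x) - ((2 - x) * t - (2 - y) * s)) * (s + t)
          = (y - x) * (12 * ((2 - x) * (2 - y)) - (9 - s) * (9 - t)) := by
        linear_combination (-(2 - x)) * hst - (y - x) * hs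
      rw [this]
      exact mul_pos (by linarith) (by linarith)
    have := pos_of_mul_pos_left h (by linarith)
    linarith
  have pA : 0 < 9 - s := by linarith
  have pB : 0 < 9 - t := by linarith
  have d1 : 0 < 9 - s - (4 - 2 * x) := by linarith
  have d2 : 0 < 9 - t - (4 - 2 * y) := by linarith
  have d3 : 0 < 9 - s + 3 * (4 - 2 * x) := by linarith
  have d4 : 0 < 9 - t + 3 * (4 - 2 * y) := by linarith
  rw [div_lt_div_iff₀ (by positivity) (by positivity)]
  have q1 : 9 - s < 3 * (4 - 2 * x) := by nlinarith
  have q2 : 9 - t < 3 * (4 - 2 * y) := by nlinarith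
  have f1 := mul_lt_mul_of_pos_right q1 pB
  have f2 := mul_lt_mul_of_pos_left q2 pA
  have := mul_pos (sub_pos.2 key) (show 0 < 3 * ((4 - 2 * y) * (9 - s)
    + (4 - 2 * x) * (9 - t)) - 2 * ((9 - s) * (9 - t)) by nlinarith)
  nlinarith

theorem aux_U :
      StrictMonoOn
        (fun b : ℝ => (3 / 8) * (Afun b - Bfun b) ^ 2 * (3 * (1 + 2 * b) + (9 - Afun b)) /
          ((1 - b) * (3 * Bfun b - Afun b)))
        (Set.Ico 0 1) := by
  rintro x ⟨hx0, hx1⟩ y ⟨hy0, hy1⟩ hxy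
  obtain ⟨s, hA, hs, ls, us, vs⟩ := aux_s x hx0 hx1.le
  obtain ⟨t, hB, ht, lt, ut, vt⟩ := aux_s y hy0 hy1.le
  simp only [hA, hB, Bfun]
  have hst : (t - s) * (s + t) = 12 * (y - x) * (1 + x + y) := by nlinarith
  have hyx : 0 < y - x := by linarith
  have hts : 0 < t - s := by
    refine pos_of_mul_pos_left (b := s + t) ?_ (by linarith)
    rw [hst]; positivity
  have hk : (t - s) * (6 + 2 * x + 2 * y) ≤ 12 * (y - x) * (1 + x + y) := by
    rw [← hst]; exact mul_le_mul_of_nonneg_left (by linarith) hts.le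
  have h6 : t - s ≤ 6 * (y - x) := by
    refine le_of_mul_le_mul_right (a := 6 + 2 * x + 2 * y) ?_ (by linarith)
    nlinarith
  have hE : (t - s - 2 * (y - x)) * (3 + 2 * y) ≤ 8 * y * (y - x) := by
    refine le_of_mul_le_mul_right (a := 3 + x + y) ?_ (by linarith)
    have e1 : (t - s - 2 * (y - x)) * (3 + x + y) ≤ 4 * (y - x) * (x + y) := by nlinarith
    have e2 := mul_le_mul_of_nonneg_right e1 (show 0 ≤ 3 + 2 * y by linarith)
    have e3 : 0 ≤ (y - x) * (y - x) := by positivity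
    nlinarith
  have hD := aux_D x y (5 + 2 * y - t) (5 + 2 * x - s) hx0 hxy hy1 (by linarith) (by linarith)
    (by linarith)
  have p1 : 0 < 3 * (4 - 2 * x) - (9 - s) := by nlinarith
  have p2 : 0 < 3 * (4 - 2 * y) - (9 - t) := by nlinarith
  have p3 : 0 < 1 - x := by linarith
  have p4 : 0 < 1 - y := by linarith
  rw [div_lt_div_iff₀ (by positivity) (by positivity)]
  have g1 := mul_lt_mul'' hD (show 3 * (1 + 2 * x) + s < 3 * (1 + 2 * y) + t by linarith)
    (by positivity) (by linarith)
  have g2 := mul_lt_mul_of_pos_right g1 p2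
  have g3 : (5 + 2 * y - t) ^ 2 * (1 - x) * (3 * (1 + 2 * y) + t) * (3 * (4 - 2 * y) - (9 - t))
      ≤ (5 + 2 * y - t) ^ 2 * (1 - x) * (3 * (1 + 2 * y) + t) * (3 * (4 - 2 * x) - (9 - s)) := by
    have : 0 ≤ 3 * (1 + 2 * y) + t := by linarith
    exact mul_le_mul_of_nonneg_left (by linarith) (by positivity)
  have g4 := lt_of_lt_of_le g2 g3
  linarith

/-- on `[0,1]` one has `3 ≤ A ≤ 6`, `2 ≤ B ≤ 4`, `A − B > 0`,
`3B − A > 0`; the function `V* = (4/3)A²/((A − B)(A + 3B))` is strictly decreasing on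
`[0, 1]`, and `U*/V* = (3/8)(A − B)²(3(1 + 2β₁) + (9 − A))/((1 − β₁)(3B − A))` is
strictly increasing on `[0, 1)`. -/
theorem Vstar_decreasing_UoverVstar_increasing :
    (∀ b ∈ Set.Icc (0 : ℝ) 1,
        3 ≤ Afun b ∧ Afun b ≤ 6 ∧ 2 ≤ Bfun b ∧ Bfun b ≤ 4 ∧
          0 < Afun b - Bfun b ∧ 0 < 3 * Bfun b - Afun b) ∧
      StrictAntiOn
        (fun b : ℝ => (4 / 3) * (Afun b) ^ 2 / ((Afun b - Bfun b) * (Afun b + 3 * Bfun b)))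
        (Set.Icc 0 1) ∧
      StrictMonoOn
        (fun b : ℝ => (3 / 8) * (Afun b - Bfun b) ^ 2 * (3 * (1 + 2 * b) + (9 - Afun b)) /
          ((1 - b) * (3 * Bfun b - Afun b)))
        (Set.Ico 0 1) := by
  refine ⟨?_, aux_V_s18, aux_U⟩
  · rintro b ⟨h0, h1⟩
    obtain ⟨s, hA, hs, l, u, -⟩ := aux_s b h0 h1
    simp only [hA, Bfun]
    refine ⟨by linarith, by linarith, by linarith, by linarith, by linarith, by nlinarith⟩
end
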